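/- Let G be an Artin group of large type and let i ≠ j. Suppose g_1, g_2 ∈ G are such that no nontrivial element of G(i,j) is a left divisor of g_1, and no nontrivial element of G(i,j) is a right divisor of g_2. If g_1 g_2 ∈ G(i,j), then g_1 g_2 = 1. -/

import Mathlib

namespace ArtinRD

/-- The alternating product `xyxy...` with `m` factors, starting with `x`. -/
def altProd {G : Type*} [Monoid G] : ℕ → G → G → G
  | 0, _, _ => 1
  | n + 1, x, y => x * altProd n y x

/-- The Artin relators determined by a Coxeter-type matrix `M` (`⊤` meaning `∞`). -/
def artinRels (n : ℕ) (M : Fin n → Fin n → ℕ∞) : Set (FreeGroup (Fin n)) :=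
  {r | ∃ i j : Fin n, i ≠ j ∧ ∃ m : ℕ, M i j = (m : ℕ∞) ∧
    r = altProd m (FreeGroup.of i) (FreeGroup.of j) *
        (altProd m (FreeGroup.of j) (FreeGroup.of i))⁻¹}

/-- The Artin group associated to the matrix `M`. -/
abbrev ArtinGroup (n : ℕ) (M : Fin n → Fin n → ℕ∞) : Type := PresentedGroup (artinRels n M)

/-- The standard generator `x_i` of the Artin group. -/
def gen (n : ℕ) (M : Fin n → Fin n → ℕ∞) (i : Fin n) : ArtinGroup n M := PresentedGroup.of i

/-- The set `A = {x_1^{±1}, ..., x_n^{±1}}` of standard letters. -/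
def genSet (n : ℕ) (M : Fin n → Fin n → ℕ∞) : Set (ArtinGroup n M) :=
  {g | ∃ i : Fin n, g = gen n M i ∨ g = (gen n M i)⁻¹}

/-- Word length of `g` with respect to a set `S`: the least `N` such that `g` is a
product of `N` elements of `S`. -/
noncomputable def wordLength {G : Type*} [Group G] (S : Set G) (g : G) : ℕ :=
  sInf {N : ℕ | ∃ w : List G, (∀ a ∈ w, a ∈ S) ∧ w.length = N ∧ w.prod = g}

/-- The word length on an Artin group with respect to the standard letters. -/
noncomputable def ℓA (n : ℕ) (M : Fin n → Fin n → ℕ∞) : ArtinGroup n M → ℕ :=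
  wordLength (genSet n M)

/-- A letter: a generator index together with a sign (`true` = positive). -/
abbrev Letter (n : ℕ) := Fin n × Bool

/-- The group element corresponding to a letter. -/
def toGen (n : ℕ) (M : Fin n → Fin n → ℕ∞) (l : Letter n) : ArtinGroup n M :=
  if l.2 then gen n M l.1 else (gen n M l.1)⁻¹

/-- The group element represented by a word over the letters. -/
def wordElt (n : ℕ) (M : Fin n → Fin n → ℕ∞) (w : List (Letter n)) : ArtinGroup n M :=
  (w.map (toGen n M)).prod

/-- A word is geodesic if its length equals the word length of the element it represents. -/
def IsGeodesic (n : ℕ) (M : Fin n → Fin n → ℕ∞) (w : List (Letter n)) : Prop :=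
  wordLength (genSet n M) (wordElt n M w) = w.length

/-- `h` is a left divisor of `g`: the factorisation `g = h ⬝ (h⁻¹ g)` is geodesic. -/
def IsLeftDiv {G : Type*} [Group G] (ℓ : G → ℕ) (h g : G) : Prop :=
  ℓ h + ℓ (h⁻¹ * g) = ℓ g

/-- `h` is a right divisor of `g`: the factorisation `g = (g h⁻¹) ⬝ h` is geodesic. -/
def IsRightDiv {G : Type*} [Group G] (ℓ : G → ℕ) (h g : G) : Prop :=
  ℓ (g * h⁻¹) + ℓ h = ℓ g

/-- The two-generator ("dihedral") subgroup `G(i,j)`. -/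
def Gij (n : ℕ) (M : Fin n → Fin n → ℕ∞) (i j : Fin n) : Subgroup (ArtinGroup n M) :=
  Subgroup.closure {gen n M i, gen n M j}

/-- The letters `x_i^{±1}, x_j^{±1}` as group elements. -/
def lettersIJ (n : ℕ) (M : Fin n → Fin n → ℕ∞) (i j : Fin n) : Set (ArtinGroup n M) :=
  {gen n M i, (gen n M i)⁻¹, gen n M j, (gen n M j)⁻¹}

/-- The maximal `{x_i,x_j}`-prefix of a word. -/
def ijPrefix (n : ℕ) (i j : Fin n) (w : List (Letter n)) : List (Letter n) :=
  w.takeWhile (fun l => l.1 == i || l.1 == j)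

/-- `h` is a left divisor of `g` lying in `G(i,j)` of maximal word length. -/
def IsMaxLD (n : ℕ) (M : Fin n → Fin n → ℕ∞) (i j : Fin n) (g h : ArtinGroup n M) : Prop :=
  h ∈ Gij n M i j ∧ IsLeftDiv (ℓA n M) h g ∧
    ∀ h' ∈ Gij n M i j, IsLeftDiv (ℓA n M) h' g → ℓA n M h' ≤ ℓA n M h

/-- `h` is a right divisor of `g` lying in `G(i,j)` of maximal word length. -/
def IsMaxRD (n : ℕ) (M : Fin n → Fin n → ℕ∞) (i j : Fin n) (g h : ArtinGroup n M) : Prop :=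
  h ∈ Gij n M i j ∧ IsRightDiv (ℓA n M) h g ∧
    ∀ h' ∈ Gij n M i j, IsRightDiv (ℓA n M) h' g → ℓA n M h' ≤ ℓA n M h

/-!
Represent `g₂⁻¹` by a reduced word `w` and `g₁ g₂` by a shortest word `u` in the two generators
`x_i` and `x_j`. Since no nontrivial element of `G(i,j)` is a left divisor of `g₂⁻¹`, no shortest
word for `g₂⁻¹` starts with a letter of `G(i,j)`, and then `u ++ w` is reduced. It represents
`g₁`, so that `g₁ g₂ ∈ G(i,j)` is a left divisor of `g₁`, hence trivial.

This uses that every reduced word is a shortest one. The reduced words are taken up to exchanging,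
at any place, a shortest word of a dihedral subgroup for another one, and a letter acts on their
classes by prepending or cancelling it. Each word factors into a word in two given generators and
a gate, a remainder which cannot be made to start with one of them; uniqueness of this
factorisation makes the exchange relation transitive on reduced words and the action of the
letters satisfy the Artin relations. Hence the group acts, and the class of a reduced word is
determined by the group element.

Two facts about dihedral Artin groups with `m ≥ 3` enter, both read off from the Garside normal
form `Δ ^ k * a₁ ⋯ a_r`: multiplying an element by a generator `x` and by `x⁻¹`, one of the two
makes it longer; and no word equal to `x ^ (r + 1) * y ^ s` and as long as it starts with `y` or
`y⁻¹`.
-/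

/-! ### Words over a system of dihedral congruences -/

/-- The formal inverse of a letter, where the Boolean is the sign of the exponent. -/
def invLetter {S : Type*} (a : S × Bool) : S × Bool := (a.1, !a.2)

@[simp] theorem invLetter_invLetter {S : Type*} (a : S × Bool) : invLetter (invLetter a) = a := by
  simp [invLetter]

theorem eq_or_eq_invLetter {S : Type*} {a b : S × Bool} (h : a.1 = b.1) :
    a = b ∨ a = invLetter b := by
  obtain ⟨i, s⟩ := a
  obtain ⟨j, t⟩ := b
  obtain rfl : i = j := h
  cases s <;> cases t <;> simp [invLetter]

theorem mk_invLetter_cons_cons {S : Type*} (a : S × Bool) (u : List (S × Bool)) :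
    FreeGroup.mk (invLetter a :: a :: u) = FreeGroup.mk u :=
  Quot.sound FreeGroup.Red.Step.cons_not_rev

theorem mk_cons_invLetter_cons {S : Type*} (a : S × Bool) (u : List (S × Bool)) :
    FreeGroup.mk (a :: invLetter a :: u) = FreeGroup.mk u :=
  Quot.sound FreeGroup.Red.Step.cons_not

/-- The words all of whose letters are powers of generators in `P`. -/
def SupportedOn {S : Type*} (P : Set S) (u : List (S × Bool)) : Prop := ∀ l ∈ u, l.1 ∈ P

namespace SupportedOn

variable {S : Type*} {P : Set S} {a : S × Bool} {u v : List (S × Bool)}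

protected theorem nil : SupportedOn P [] := by simp [SupportedOn]

theorem cons_iff : SupportedOn P (a :: u) ↔ a.1 ∈ P ∧ SupportedOn P u := by simp [SupportedOn]

protected theorem cons (ha : a.1 ∈ P) (hu : SupportedOn P u) : SupportedOn P (a :: u) :=
  cons_iff.2 ⟨ha, hu⟩

protected theorem append (hu : SupportedOn P u) (hv : SupportedOn P v) : SupportedOn P (u ++ v) :=
  List.forall_mem_append.2 ⟨hu, hv⟩

protected theorem invRev (hu : SupportedOn P u) : SupportedOn P (FreeGroup.invRev u) := by
  intro l hl
  obtain ⟨l', hl', rfl⟩ := List.mem_map.1 (List.mem_reverse.1 hl)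
  exact hu l' hl'

protected theorem replicate (ha : a.1 ∈ P) (s : ℕ) : SupportedOn P (List.replicate s a) :=
  fun _ hl => (List.eq_of_mem_replicate hl).symm ▸ ha

end SupportedOn

theorem pair_eq_of_mem_of_ne {S : Type*} {i j k l : S} (hk : k ∈ ({i, j} : Set S))
    (hl : l ∈ ({i, j} : Set S)) (hkl : k ≠ l) : ({k, l} : Set S) = {i, j} := by
  rcases hk with rfl | rfl <;> rcases hl with rfl | rfl <;>
    first | exact absurd rfl hkl | rfl | exact Set.pair_comm _ _

/-- The data on which the solution of the word problem rests: a congruence for every set of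
generators, of which only those of two-element sets matter. In an Artin group, the congruence of `P`
is the one generated by the relations between generators in `P`. -/
structure DihedralSystem (S : Type*) where
  /-- The congruence belonging to a set of generators. -/
  con : Set S → Con (FreeGroup S)
  length_mod_two : ∀ {P u v}, con P (FreeGroup.mk u) (FreeGroup.mk v) →
    u.length % 2 = v.length % 2
  /-- Multiplying a geodesic word by a letter or by its inverse, one of the two lengthens it. -/
  no_peak : ∀ {i j a p q}, i ≠ j → SupportedOn {i, j} (a :: p) → p.length = q.length →
    (∀ v, SupportedOn {i, j} v → con {i, j} (FreeGroup.mk (a :: p)) (FreeGroup.mk v) →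
      (a :: p).length ≤ v.length) →
    ¬ con {i, j} (FreeGroup.mk (a :: p)) (FreeGroup.mk (invLetter a :: q))
  /-- No word equivalent to `x ^ (r + 1) * y ^ s` and of the same length starts with `y` or
  `y⁻¹`. -/
  no_turn : ∀ {x y b : S × Bool} {q r s}, x.1 ≠ y.1 → b.1 = y.1 → q.length = r + s →
    ¬ con {x.1, y.1} (FreeGroup.mk (List.replicate (r + 1) x ++ List.replicate s y))
      (FreeGroup.mk (b :: q))

namespace DihedralSystem

variable {S : Type*} (E : DihedralSystem S)

/-- Two words are `P`-equal if the congruence of `P` identifies them. -/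
def DihEq (P : Set S) (u v : List (S × Bool)) : Prop :=
  E.con P (FreeGroup.mk u) (FreeGroup.mk v)

/-- A word is `P`-geodesic if no shorter word supported on `P` is `P`-equal to it. -/
def DihGeodesic (P : Set S) (u : List (S × Bool)) : Prop :=
  ∀ v, SupportedOn P v → E.DihEq P u v → u.length ≤ v.length

/-- The smallest relation between words which is compatible with prepending a letter and allows to
exchange two geodesic words of the same dihedral group when they are prefixes up to the relation.
It is transitive only among the reduced words, where it turns out to be equality in the group. -/
inductive Sim : List (S × Bool) → List (S × Bool) → Prop
  | nil : Sim [] []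
  | cons (a : S × Bool) {w v : List (S × Bool)} : Sim w v → Sim (a :: w) (a :: v)
  | exchange {a b : S × Bool} {p q t w v : List (S × Bool)} : a.1 ≠ b.1 →
      SupportedOn {a.1, b.1} p → SupportedOn {a.1, b.1} q → p.length = q.length →
      E.DihEq {a.1, b.1} (a :: p) (b :: q) →
      Sim w (p ++ t) → Sim v (q ++ t) → Sim (a :: w) (b :: v)

/-- A word is reduced if no letter of it cancels, up to `Sim`, with the rest of the word behind it;
the reduced words turn out to be the geodesic ones. -/
def Reduced : List (S × Bool) → Prop
  | [] => True
  | a :: w => Reduced w ∧ ∀ w', ¬ E.Sim w (invLetter a :: w')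

/-- No word related to `t` starts with a letter in the generators `P`. -/
def HeadFree (P : Set S) (t : List (S × Bool)) : Prop :=
  ∀ b t', b.1 ∈ P → ¬ E.Sim t (b :: t')

/-- The gate decomposition of `w`: a word `u` supported on `P` followed by the gate `t`, the
shortest representative of the coset of `w`. -/
structure IsGate (P : Set S) (w u t : List (S × Bool)) : Prop where
  supp : SupportedOn P u
  headFree : E.HeadFree P t
  sim : E.Sim w (u ++ t)

variable {E} {P : Set S} {a b : S × Bool} {p q u v w t u' v' t' : List (S × Bool)}

namespace DihEq

protected theorem refl (u : List (S × Bool)) : E.DihEq P u u := (E.con P).refl _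

protected theorem symm (h : E.DihEq P u v) : E.DihEq P v u := (E.con P).symm h

protected theorem trans (h : E.DihEq P u v) (h' : E.DihEq P v w) : E.DihEq P u w :=
  (E.con P).trans h h'

protected theorem append (h : E.DihEq P u v) (h' : E.DihEq P u' v') :
    E.DihEq P (u ++ u') (v ++ v') := by
  simpa only [DihEq, ← FreeGroup.mul_mk] using (E.con P).mul h h'

protected theorem append_right (h : E.DihEq P u v) (t : List (S × Bool)) :
    E.DihEq P (u ++ t) (v ++ t) :=
  h.append (.refl t)

protected theorem cons (h : E.DihEq P u v) : E.DihEq P (a :: u) (a :: v) :=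
  (DihEq.refl [a]).append h

theorem cons_left_iff : E.DihEq P (a :: p) q ↔ E.DihEq P p (invLetter a :: q) := by
  refine ⟨fun h => ?_, fun h => ?_⟩
  · have := h.cons (a := invLetter a)
    rwa [DihEq, mk_invLetter_cons_cons] at this
  · have := h.cons (a := a)
    rwa [DihEq, mk_cons_invLetter_cons] at this

theorem of_cons (h : E.DihEq P (a :: p) (a :: q)) : E.DihEq P p q := by
  have := cons_left_iff.1 h
  rwa [DihEq, mk_invLetter_cons_cons] at this

end DihEq

theorem DihGeodesic.of_dihEq (hu : E.DihGeodesic P u) (h : E.DihEq P u v)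
    (hl : u.length = v.length) : E.DihGeodesic P v :=
  fun w hw hvw => hl ▸ hu w hw (h.trans hvw)

theorem DihGeodesic.tail (ha : a.1 ∈ P) (h : E.DihGeodesic P (a :: u)) : E.DihGeodesic P u :=
  fun v hv huv => by simpa using h (a :: v) (.cons ha hv) huv.cons

theorem exists_dihGeodesic (hu : SupportedOn P u) :
    ∃ v, SupportedOn P v ∧ E.DihEq P u v ∧ E.DihGeodesic P v := by
  obtain ⟨v, ⟨hv, huv⟩, hmin⟩ := (measure List.length).wf.has_min
    {v | SupportedOn P v ∧ E.DihEq P u v} ⟨u, hu, .refl u⟩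
  exact ⟨v, hv, huv, fun w hw hvw => not_lt.1 (hmin w ⟨hw, huv.trans hvw⟩)⟩

namespace Sim

protected theorem refl : ∀ w, E.Sim w w
  | [] => .nil
  | a :: w => .cons a (Sim.refl w)

protected theorem symm (h : E.Sim w v) : E.Sim v w := by
  induction h with
  | nil => exact .nil
  | cons a _ ih => exact .cons a ih
  | exchange hab hp hq hl hd hw hv =>
    rw [Set.pair_comm] at hp hq hd
    exact .exchange hab.symm hq hp hl.symm hd.symm hv hw

theorem length_eq (h : E.Sim w v) : w.length = v.length := by
  induction h with
  | nil => rfl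
  | cons a _ ih => simp [ih]
  | exchange _ _ _ hl _ _ _ ihw ihv =>
    simp only [List.length_append, List.length_cons] at *
    omega

theorem append_left (h : E.Sim w v) : ∀ u, E.Sim (u ++ w) (u ++ v)
  | [] => h
  | a :: u => .cons a (h.append_left u)

theorem of_cons (h : E.Sim (a :: w) (a :: v)) : E.Sim w v := by
  cases h with
  | cons _ h => exact h
  | exchange hab => exact absurd rfl hab

theorem eq_nil (h : E.Sim [] w) : w = [] := List.length_eq_zero_iff.1 h.length_eq.symm

/-- The exchange constructor for a pair of generators whose order is not known. -/
theorem exchange_of_mem {i j : S} (ha : a.1 ∈ ({i, j} : Set S)) (hb : b.1 ∈ ({i, j} : Set S))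
    (hab : a.1 ≠ b.1) (hp : SupportedOn {i, j} p) (hq : SupportedOn {i, j} q)
    (hl : p.length = q.length) (hd : E.DihEq {i, j} (a :: p) (b :: q)) (t : List (S × Bool)) :
    E.Sim (a :: (p ++ t)) (b :: (q ++ t)) := by
  rw [← pair_eq_of_mem_of_ne ha hb hab] at hp hq hd
  exact .exchange hab hp hq hl hd (.refl _) (.refl _)

end Sim

theorem Reduced.of_append : ∀ {u t : List (S × Bool)}, E.Reduced (u ++ t) → E.Reduced t
  | [], _, h => h
  | _ :: _, _, h => Reduced.of_append h.1

theorem Reduced.eq_replicate {j : S} (t : List (S × Bool)) : ∀ {u : List (S × Bool)},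
    E.Reduced (u ++ t) → SupportedOn {j} u → ∃ y s, y.1 = j ∧ u = List.replicate s y
  | [], _, _ => ⟨(j, true), 0, rfl, rfl⟩
  | a :: u, h, hu => by
    obtain ⟨ha, hu⟩ := SupportedOn.cons_iff.1 hu
    obtain ⟨y, s, hy, rfl⟩ := Reduced.eq_replicate t h.1 hu
    rcases s with _ | s
    · exact ⟨a, 1, ha, rfl⟩
    · rcases eq_or_eq_invLetter (hy.trans ha.symm) with rfl | rfl
      · exact ⟨y, s + 2, hy, rfl⟩
      · exact absurd (.refl _) (h.2 _)

theorem sim_of_dihEq {i j : S} (hij : i ≠ j) (t : List (S × Bool)) : ∀ {u u' : List (S × Bool)},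
    SupportedOn {i, j} u → SupportedOn {i, j} u' → u.length = u'.length →
    E.DihGeodesic {i, j} u → E.DihEq {i, j} u u' → E.Sim (u ++ t) (u' ++ t)
  | [], [], _, _, _, _, _ => .refl _
  | a :: p, b :: q, hu, hu', hl, hg, hd => by
    obtain ⟨ha, hp⟩ := SupportedOn.cons_iff.1 hu
    obtain ⟨hb, hq⟩ := SupportedOn.cons_iff.1 hu'
    have hpq : p.length = q.length := by simpa using hl
    by_cases hab : a.1 = b.1
    · rcases eq_or_eq_invLetter hab.symm with rfl | rfl
      · exact .cons _ (sim_of_dihEq hij t hp hq hpq (hg.tail ha) hd.of_cons)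
      · exact absurd hd (E.no_peak hij hu hpq hg)
    · exact .exchange_of_mem ha hb hab hp hq hpq hd t

/-- A shortening of `a :: p` by the dihedral relations would make `a` cancel in `p`. -/
theorem Reduced.dihGeodesic {i j : S} (hij : i ≠ j) (t : List (S × Bool)) :
    ∀ {u : List (S × Bool)}, SupportedOn {i, j} u → E.Reduced (u ++ t) → E.DihGeodesic {i, j} u
  | [], _, _ => fun v _ _ => by simp
  | a :: p, hu, hr => by
    obtain ⟨ha, hp⟩ := SupportedOn.cons_iff.1 hu
    have hpg : E.DihGeodesic {i, j} p := Reduced.dihGeodesic hij t hp hr.1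
    intro v hv huv
    by_contra! hlt
    have hpv : E.DihEq {i, j} p (invLetter a :: v) := DihEq.cons_left_iff.1 huv
    have hsupp : SupportedOn {i, j} (invLetter a :: v) := .cons ha hv
    have hle := hpg _ hsupp hpv
    have hpar := E.length_mod_two huv
    simp only [List.length_cons] at hlt hle hpar
    exact hr.2 _ (sim_of_dihEq hij t hp hsupp (by simp only [List.length_cons]; omega) hpg hpv)

variable (E) in
/-- The induction hypothesis for the theory of reduced words: up to length `N`, the relation `Sim`
is transitive from reduced words and preserves them. -/
structure Coherent (N : ℕ) : Prop where
  trans : ∀ {w v z}, w.length ≤ N → E.Reduced w → E.Sim w v → E.Sim v z → E.Sim w z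
  reduced : ∀ {w v}, w.length ≤ N → E.Reduced w → E.Sim w v → E.Reduced v

namespace Coherent

variable {N : ℕ} (hN : E.Coherent N)
include hN

theorem exists_isGate (P : Set S) {w : List (S × Bool)} (hwN : w.length ≤ N) (hw : E.Reduced w) :
    ∃ u t, E.IsGate P w u t ∧ E.Reduced t := by
  by_cases h : E.HeadFree P w
  · exact ⟨[], w, ⟨.nil, h, .refl _⟩, hw⟩
  · simp only [HeadFree, not_forall, not_not] at h
    obtain ⟨b, w', hb, h⟩ := h
    have hlen : w.length = w'.length + 1 := h.length_eq
    obtain ⟨u, t, ⟨hu, ht, hw'⟩, htr⟩ :=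
      exists_isGate P (w := w') (by omega) (hN.reduced hwN hw h).1
    exact ⟨b :: u, t, ⟨.cons hb hu, ht, hN.trans hwN hw h (hw'.cons b)⟩, htr⟩
termination_by w.length

theorem exists_isGate_replicate (j : S) (hwN : w.length ≤ N) (hw : E.Reduced w) :
    ∃ y s t, y.1 = j ∧ E.IsGate {j} w (List.replicate s y) t ∧ E.Reduced t := by
  obtain ⟨u, t, hg, ht⟩ := hN.exists_isGate {j} hwN hw
  obtain ⟨y, s, hy, rfl⟩ := (hN.reduced hwN hw hg.sim).eq_replicate t hg.supp
  exact ⟨y, s, t, hy, hg, ht⟩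

theorem isGate_append (hwN : w.length ≤ N) (hw : E.Reduced w) (h : E.Sim w (u ++ v))
    (hu : SupportedOn P u) (hv : E.IsGate P v u' t) : E.IsGate P w (u ++ u') t := by
  refine ⟨hu.append hv.supp, hv.headFree, ?_⟩
  rw [List.append_assoc]
  exact hN.trans hwN hw h (hv.sim.append_left u)

/-- Both sides of an exchange have the same gate, that of the common tail. -/
theorem exists_isGate_append_append (hwN : w.length ≤ N) (hw : E.Reduced w) (hv : E.Reduced v)
    (hp : SupportedOn P p) (hq : SupportedOn P q) (hl : p.length = q.length)
    (hwp : E.Sim w (p ++ t)) (hvq : E.Sim v (q ++ t)) :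
    ∃ r t₀, E.IsGate P t r t₀ ∧ E.Reduced t₀ ∧ E.IsGate P w (p ++ r) t₀ ∧
      E.IsGate P v (q ++ r) t₀ := by
  have hw_len := hwp.length_eq
  have hv_len := hvq.length_eq
  simp only [List.length_append] at hw_len hv_len
  obtain ⟨r, t₀, hg, ht₀⟩ :=
    hN.exists_isGate P (w := t) (by omega) (hN.reduced hwN hw hwp).of_append
  exact ⟨r, t₀, hg, ht₀, hN.isGate_append hwN hw hwp hp hg,
    hN.isGate_append (by omega) hv hvq hq hg⟩

theorem dihEq_and_sim_of_sim_append {i j : S} {u t u' t' : List (S × Bool)}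
    (huN : (u ++ t).length ≤ N) (hr : E.Reduced (u ++ t)) (hu : SupportedOn {i, j} u)
    (hu' : SupportedOn {i, j} u') (ht : E.HeadFree {i, j} t) (ht' : E.HeadFree {i, j} t')
    (h : E.Sim (u ++ t) (u' ++ t')) : E.DihEq {i, j} u u' ∧ E.Sim t t' := by
  match u, u' with
  | [], [] => exact ⟨.refl _, h⟩
  | [], b :: q => exact absurd h (ht b _ (SupportedOn.cons_iff.1 hu').1)
  | a :: p, [] => exact absurd h.symm (ht' a _ (SupportedOn.cons_iff.1 hu).1)
  | a :: p, b :: q =>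
    obtain ⟨ha, hp⟩ := SupportedOn.cons_iff.1 hu
    obtain ⟨hb, hq⟩ := SupportedOn.cons_iff.1 hu'
    have hr' := hN.reduced huN hr h
    have hlen := h.length_eq
    simp only [List.cons_append, List.length_cons] at huN h hr hlen hr'
    cases h with
    | cons _ h =>
      obtain ⟨hpq, htt'⟩ := dihEq_and_sim_of_sim_append (by omega) hr.1 hp hq ht ht' h
      exact ⟨hpq.cons, htt'⟩
    | exchange hab hp' hq' hl hd hsim hsim' =>
      rw [pair_eq_of_mem_of_ne ha hb hab] at hp' hq' hd
      obtain ⟨r, t₀, -, -, hg, hg'⟩ :=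
        hN.exists_isGate_append_append (by omega) hr.1 hr'.1 hp' hq' hl hsim hsim'
      obtain ⟨hpd, hts⟩ :=
        dihEq_and_sim_of_sim_append (by omega) hr.1 hp hg.supp ht hg.headFree hg.sim
      obtain ⟨hqd, hts'⟩ :=
        dihEq_and_sim_of_sim_append (by omega) hr'.1 hq hg'.supp ht' hg'.headFree hg'.sim
      refine ⟨hpd.cons.trans ((hd.append_right r).trans hqd.cons.symm), ?_⟩
      simp only [List.length_append] at huN
      exact hN.trans (by omega) hr.1.of_append hts hts'.symm
termination_by (u ++ t).length
decreasing_by all_goals simp only [List.length_append, List.length_cons] at hlen ⊢; omega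

theorem isGate_unique {i j : S} (hwN : w.length ≤ N) (hw : E.Reduced w)
    (h : E.IsGate {i, j} w u t) (h' : E.IsGate {i, j} w u' t') :
    E.DihEq {i, j} u u' ∧ E.Sim t t' ∧ u.length = u'.length := by
  have hr := hN.reduced hwN hw h.sim
  have hlen := h.sim.length_eq
  have hsim := hN.trans (by omega) hr h.sim.symm h'.sim
  obtain ⟨hd, hs⟩ := hN.dihEq_and_sim_of_sim_append (by omega) hr h.supp h'.supp h.headFree
    h'.headFree hsim
  have hlen_sim := hsim.length_eq
  have hlen_t := hs.length_eq
  simp only [List.length_append] at hlen_sim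
  exact ⟨hd, hs, by omega⟩

theorem reduced_append_of_dihGeodesic {i j : S} (ht : E.HeadFree {i, j} t) (htr : E.Reduced t) :
    ∀ {u : List (S × Bool)}, (u ++ t).length ≤ N + 1 → SupportedOn {i, j} u →
      E.DihGeodesic {i, j} u → E.Reduced (u ++ t)
  | [], _, _, _ => htr
  | a :: p, hlen, hu, hg => by
    obtain ⟨ha, hp⟩ := SupportedOn.cons_iff.1 hu
    simp only [List.cons_append, List.length_cons] at hlen
    have hpr := reduced_append_of_dihGeodesic ht htr (by omega) hp (hg.tail ha)
    refine ⟨hpr, fun w' h => ?_⟩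
    have hw'_len : (p ++ t).length = w'.length + 1 := h.length_eq
    obtain ⟨q, t', hw', -⟩ :=
      hN.exists_isGate {i, j} (w := w') (by omega) (hN.reduced (by omega) hpr h).1
    have hgate := hN.isGate_append (u := [invLetter a]) (by omega) hpr h (.cons ha .nil) hw'
    obtain ⟨hd, -, hl⟩ := hN.isGate_unique (by omega) hpr ⟨hp, ht, .refl _⟩ hgate
    have hle := hg q hw'.supp (DihEq.cons_left_iff.2 hd)
    simp only [List.length_cons, List.length_append, List.length_nil] at hle hl
    omega

/-- Split off a maximal power of `y.1`, then one of `x.1`. Either the rest can start with `y.1`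
again, or these two powers are already the whole `{y.1, x.1}`-part of the word. -/
theorem dihEq_replicate_append_replicate_or {v v₁ v₂ : List (S × Bool)} {x y : S × Bool} {r s : ℕ}
    (hvN : v.length ≤ N) (hv : E.Reduced v) (hg : E.IsGate {y.1} v (List.replicate r y) v₁)
    (hg₁ : E.IsGate {x.1} v₁ (List.replicate s x) v₂) (hg' : E.IsGate {y.1, x.1} v u t) :
    (E.DihEq {y.1, x.1} (List.replicate r y ++ List.replicate s x) u ∧ r + s = u.length) ∨
      s ≠ 0 ∧ ∃ c v₃, c.1 = y.1 ∧ E.Sim v₂ (c :: v₃) := by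
  have hv_len := hg.sim.length_eq
  have hv₁_len := hg₁.sim.length_eq
  have hv₁ := (hN.reduced hvN hv hg.sim).of_append
  simp only [List.length_append, List.length_replicate] at hv_len hv₁_len
  obtain ⟨u', t', hg₂, -⟩ := hN.exists_isGate {y.1, x.1} (w := v₂) (by omega)
    (hN.reduced (by omega) hv₁ hg₁.sim).of_append
  have hgate : E.IsGate {y.1, x.1} v (List.replicate r y ++ (List.replicate s x ++ u')) t' :=
    hN.isGate_append hvN hv hg.sim (.replicate (.inl rfl) _) <|
      hN.isGate_append (by omega) hv₁ hg₁.sim (.replicate (.inr rfl) _) hg₂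
  obtain ⟨hd, -, hl⟩ := hN.isGate_unique hvN hv hgate hg'
  simp only [List.length_append, List.length_replicate] at hl
  rcases u' with _ | ⟨c, u'⟩
  · rw [List.append_nil] at hd
    exact .inl ⟨hd, by simpa using hl⟩
  · have hc : c.1 = y.1 := (SupportedOn.cons_iff.1 hg₂.supp).1.resolve_right fun hc =>
      hg₁.headFree _ _ hc hg₂.sim
    refine .inr ⟨?_, c, _, hc, hg₂.sim⟩
    rintro rfl
    exact hg.headFree c _ hc (hN.trans (by omega) hv₁ hg₁.sim hg₂.sim)

/-- If `v` starts with a maximal nontrivial power of `y.1`, followed by a word which can start with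
`x`, then `x.1` is the only generator besides `y.1` with which `v` itself can start. -/
theorem head_eq_of_second_syllable {v v₁ v' v'' : List (S × Bool)} {x y z : S × Bool} {s : ℕ}
    (hvN : v.length ≤ N) (hv : E.Reduced v) (hg : E.IsGate {y.1} v (List.replicate (s + 1) y) v₁)
    (hx : E.Sim v₁ (x :: v')) (hz : E.Sim v (z :: v'')) (hzy : z.1 ≠ y.1) : x.1 = z.1 := by
  by_contra hxz
  have hv_len := hg.sim.length_eq
  have hz_len := hz.length_eq
  have hv₁ := (hN.reduced hvN hv hg.sim).of_append
  simp only [List.length_append, List.length_replicate, List.length_cons] at hv_len hz_len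
  have hv₁_lt : v₁.length < v.length := by omega
  obtain ⟨z', q, v₂, hz', hg₁, -⟩ := hN.exists_isGate_replicate z.1 (w := v₁) (by omega) hv₁
  rw [← hz'] at hg₁ hzy hxz
  obtain ⟨u', t', hg', -⟩ :=
    hN.exists_isGate {y.1, z'.1} (w := v'') (by omega) (hN.reduced hvN hv hz).1
  have hgate : E.IsGate {y.1, z'.1} v (z :: u') t' :=
    hN.isGate_append (u := [z]) hvN hv hz (.cons (.inr hz'.symm) .nil) hg'
  rcases hN.dihEq_replicate_append_replicate_or hvN hv hg hg₁ hgate with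
    ⟨hd, hl⟩ | ⟨hq, c, v₃, hc, hv₂⟩
  · rw [List.length_cons] at hl
    exact E.no_turn hzy.symm hz'.symm (by omega) hd
  · obtain ⟨q, rfl⟩ := Nat.exists_eq_succ_of_ne_zero hq
    have hcx : c.1 = x.1 := head_eq_of_second_syllable (by omega) hv₁ hg₁ hv₂ hx hxz
    exact hg.headFree x _ (hcx.symm.trans hc) hx
termination_by v.length
decreasing_by exact hv₁_lt

theorem exists_isGate_of_exchange {v v₀ : List (S × Bool)} {r : ℕ} (hvN : v.length ≤ N)
    (hv : E.Reduced v) (hg : E.IsGate {b.1} v (List.replicate r b) v₀) (hba : b.1 ≠ a.1)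
    (hq : SupportedOn {b.1, a.1} q) (hl : p.length = q.length)
    (hd : E.DihEq {b.1, a.1} (b :: q) (a :: p)) (hvq : E.Sim v (q ++ t)) :
    ∃ x s v₁ c v₂, x.1 = a.1 ∧ E.IsGate {a.1} v₀ (List.replicate (s + 1) x) v₁ ∧
      E.Sim v₁ (c :: v₂) ∧ c.1 = b.1 := by
  have hv_len := hg.sim.length_eq
  have hvq_len := hvq.length_eq
  have hv₀ := (hN.reduced hvN hv hg.sim).of_append
  simp only [List.length_append, List.length_replicate] at hv_len hvq_len
  obtain ⟨x, s, v₁, hx, hg₀, -⟩ := hN.exists_isGate_replicate a.1 (w := v₀) (by omega) hv₀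
  rw [← hx] at hg₀ hba hq hd ⊢
  obtain ⟨r', t', hgt, -⟩ := hN.exists_isGate {b.1, x.1} (w := t) (by omega)
    (hN.reduced hvN hv hvq).of_append
  rcases hN.dihEq_replicate_append_replicate_or hvN hv hg hg₀
    (hN.isGate_append hvN hv hvq hq hgt) with ⟨hd', hl'⟩ | ⟨hs, c, v₂, hc, hv₁⟩
  · have hturn : E.DihEq {b.1, x.1} (List.replicate (r + 1) b ++ List.replicate s x)
        (a :: (p ++ r')) := hd'.cons.trans (hd.append_right r')
    rw [List.length_append] at hl'
    exact absurd hturn <|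
      E.no_turn hba hx.symm (by rw [List.length_append]; omega)
  · obtain ⟨s, rfl⟩ := Nat.exists_eq_succ_of_ne_zero hs
    exact ⟨x, s, v₁, c, v₂, rfl, hg₀, hv₁, hc⟩

/-- A reduced word cannot start with three different generators. -/
theorem head_eq_of_exchange_of_exchange {c : S × Bool} {v p q t p' q' t' : List (S × Bool)}
    (hvN : v.length ≤ N) (hbv : E.Reduced (b :: v)) (hba : b.1 ≠ a.1) (hbc : b.1 ≠ c.1)
    (hq : SupportedOn {b.1, a.1} q) (hl : p.length = q.length)
    (hd : E.DihEq {b.1, a.1} (b :: q) (a :: p)) (hvq : E.Sim v (q ++ t))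
    (hq' : SupportedOn {b.1, c.1} q') (hl' : p'.length = q'.length)
    (hd' : E.DihEq {b.1, c.1} (b :: q') (c :: p'))
    (hvq' : E.Sim v (q' ++ t')) : a.1 = c.1 := by
  obtain ⟨r, v₀, hg⟩ : ∃ r v₀, E.IsGate {b.1} v (List.replicate r b) v₀ := by
    obtain ⟨y, r, v₀, hy, hg, -⟩ := hN.exists_isGate_replicate b.1 hvN hbv.1
    rcases r with _ | r
    · exact ⟨0, v₀, hg⟩
    · rcases eq_or_eq_invLetter hy with rfl | rfl
      · exact ⟨r + 1, v₀, hg⟩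
      · exact absurd hg.sim (hbv.2 _)
  have hv_len := hg.sim.length_eq
  have hv₀ := (hN.reduced hvN hbv.1 hg.sim).of_append
  simp only [List.length_append, List.length_replicate] at hv_len
  obtain ⟨x, s, v₁, e, v₂, hx, hg₁, he, heb⟩ :=
    hN.exists_isGate_of_exchange hvN hbv.1 hg hba hq hl hd hvq
  obtain ⟨x', s', v₁', -, -, hx', hg₁', -, -⟩ :=
    hN.exists_isGate_of_exchange hvN hbv.1 hg hbc hq' hl' hd' hvq'
  by_contra hac
  have hex' : e.1 = x'.1 := hN.head_eq_of_second_syllable (by omega) hv₀ (hx ▸ hg₁) he hg₁'.sim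
    (by rw [hx, hx']; exact Ne.symm hac)
  exact hbc (by rw [← heb, hex', hx'])

theorem reduced_cons_of_sim (hwN : w.length ≤ N) (haw : E.Reduced (a :: w)) (h : E.Sim w v) :
    E.Reduced (a :: v) :=
  ⟨hN.reduced hwN haw.1 h, fun z hz => haw.2 z (hN.trans hwN haw.1 h hz)⟩

theorem dihGeodesic_cons_of_isGate {i j : S} (hij : i ≠ j) (ha : a.1 ∈ ({i, j} : Set S))
    (hwN : w.length ≤ N) (haw : E.Reduced (a :: w)) (hg : E.IsGate {i, j} w u t) :
    E.DihGeodesic {i, j} (a :: u) :=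
  Reduced.dihGeodesic hij t (.cons ha hg.supp) (hN.reduced_cons_of_sim hwN haw hg.sim)

theorem reduced_of_sim_cons (hwN : w.length ≤ N) (haw : E.Reduced (a :: w))
    (h : E.Sim (a :: w) (b :: v)) : E.Reduced (b :: v) := by
  have hlen := h.length_eq
  simp only [List.length_cons, Nat.add_right_cancel_iff] at hlen
  cases h with
  | cons _ h => exact hN.reduced_cons_of_sim hwN haw h
  | @exchange _ _ p q t _ _ hab hp hq hl hd hwp hvq =>
    have hw_len := hwp.length_eq
    simp only [List.length_append] at hw_len
    obtain ⟨r, t₀, hg, ht₀⟩ := hN.exists_isGate {a.1, b.1} (w := t) (by omega)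
      (hN.reduced hwN haw.1 hwp).of_append
    have ht_len := hg.sim.length_eq
    simp only [List.length_append] at ht_len
    have hgeo : E.DihGeodesic {a.1, b.1} (b :: (q ++ r)) :=
      (hN.dihGeodesic_cons_of_isGate hab (.inl rfl) hwN haw
        (hN.isGate_append hwN haw.1 hwp hp hg)).of_dihEq (hd.append_right r) (by simp [hl])
    have hred : E.Reduced (b :: (q ++ r ++ t₀)) :=
      hN.reduced_append_of_dihGeodesic hg.headFree ht₀
        (by simp only [List.cons_append, List.length_cons, List.length_append]; omega)
        (.cons (.inr rfl) (hq.append hg.supp)) hgeo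
    have hsim : E.Sim (q ++ r ++ t₀) v := by
      refine hN.trans ?_ hred.1 ?_ hvq.symm
      · simp only [List.length_append]; omega
      · rw [List.append_assoc]; exact hg.sim.symm.append_left q
    exact hN.reduced_cons_of_sim (by simp only [List.length_append]; omega) hred hsim

/-- Two consecutive exchanges inside one dihedral group compose to an exchange or a common head. -/
theorem sim_of_exchange_of_exchange {c : S × Bool} {w v z p q t p' q' t' : List (S × Bool)}
    (hwN : w.length ≤ N) (haw : E.Reduced (a :: w)) (hv : E.Reduced v) (hz : E.Reduced z)
    (hvz : v.length = z.length) (hab : a.1 ≠ b.1) (hac : a.1 = c.1)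
    (hp : SupportedOn {a.1, b.1} p) (hq : SupportedOn {a.1, b.1} q) (hl : p.length = q.length)
    (hd : E.DihEq {a.1, b.1} (a :: p) (b :: q)) (hwp : E.Sim w (p ++ t)) (hvq : E.Sim v (q ++ t))
    (hp' : SupportedOn {a.1, b.1} p') (hq' : SupportedOn {a.1, b.1} q')
    (hl' : p'.length = q'.length) (hd' : E.DihEq {a.1, b.1} (b :: p') (c :: q'))
    (hvp' : E.Sim v (p' ++ t')) (hzq' : E.Sim z (q' ++ t')) : E.Sim (a :: w) (c :: z) := by
  have hw_len := hwp.length_eq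
  have hv_len := hvq.length_eq
  simp only [List.length_append] at hw_len hv_len
  obtain ⟨r, t₀, -, -, hgw, hgv⟩ :=
    hN.exists_isGate_append_append hwN haw.1 hv hp hq hl hwp hvq
  obtain ⟨r', t₀', -, -, hgv', hgz⟩ :=
    hN.exists_isGate_append_append (by omega) hv hz hp' hq' hl' hvp' hzq'
  obtain ⟨hqp', ht₀, hql⟩ := hN.isGate_unique (by omega) hv hgv hgv'
  have hpq' : E.DihEq {a.1, b.1} (a :: (p ++ r)) (c :: (q' ++ r')) :=
    (hd.append_right r).trans (hqp'.cons.trans (hd'.append_right r'))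
  have hgeo := hN.dihGeodesic_cons_of_isGate hab (.inl rfl) hwN haw hgw
  have hpl : (p ++ r).length = (q' ++ r').length := by
    simp only [List.length_append] at hql ⊢
    omega
  rcases eq_or_eq_invLetter hac.symm with rfl | rfl
  · have hpq'_sim := sim_of_dihEq hab t₀ hgw.supp hgz.supp hpl (hgeo.tail (.inl rfl)) hpq'.of_cons
    have hw : E.Sim w (q' ++ r' ++ t₀') :=
      hN.trans hwN haw.1 (hN.trans hwN haw.1 hgw.sim hpq'_sim) (ht₀.append_left _)
    exact .cons _ (hN.trans hwN haw.1 hw hgz.sim.symm)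
  · exact absurd hpq' (E.no_peak hab (.cons (.inl rfl) hgw.supp) hpl hgeo)

theorem sim_cons_trans {c : S × Bool} {w v z : List (S × Bool)} (hwN : w.length ≤ N)
    (haw : E.Reduced (a :: w)) (h : E.Sim (a :: w) (b :: v)) (h' : E.Sim (b :: v) (c :: z)) :
    E.Sim (a :: w) (c :: z) := by
  have hbv := hN.reduced_of_sim_cons hwN haw h
  have hlen := h.length_eq
  have hlen' := h'.length_eq
  simp only [List.length_cons, Nat.add_right_cancel_iff] at hlen hlen'
  have hcz := hN.reduced_of_sim_cons (by omega) hbv h'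
  cases h with
  | cons _ h =>
    cases h' with
    | cons _ h' => exact .cons _ (hN.trans hwN haw.1 h h')
    | exchange hab hp hq hl hd hwp hvq =>
      exact .exchange hab hp hq hl hd (hN.trans hwN haw.1 h hwp) hvq
  | exchange hab hp hq hl hd hwp hvq =>
    cases h' with
    | cons _ h' =>
      exact .exchange hab hp hq hl hd hwp (hN.trans (by omega) hcz.1 h'.symm hvq)
    | exchange hbc hp' hq' hl' hd' hvp' hzq' =>
      by_cases hac : a.1 = c.1
      · rw [← hac, Set.pair_comm] at hp' hq' hd'
        exact hN.sim_of_exchange_of_exchange hwN haw hbv.1 hcz.1 hlen' hab hac hp hq hl hd hwp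
          hvq hp' hq' hl' hd' hvp' hzq'
      · rw [Set.pair_comm] at hq hd
        exact absurd (hN.head_eq_of_exchange_of_exchange (by omega) hbv hab.symm hbc hq hl
          hd.symm hvq hp' hl'.symm hd' hvp') hac

end Coherent

theorem coherent : ∀ N, E.Coherent N
  | 0 => by
    refine ⟨fun {w v z} hw _ h h' => ?_, fun {w v} hw _ h => ?_⟩ <;>
    obtain rfl := List.length_eq_zero_iff.1 (Nat.le_zero.1 hw) <;>
    obtain rfl := h.eq_nil
    · exact h'
    · trivial
  | N + 1 => by
    have ih := coherent N
    refine ⟨fun {w v z} hwN hw h h' => ?_, fun {w v} hwN hw h => ?_⟩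
    · match w, v, z with
      | [], v, _ => obtain rfl := h.eq_nil; exact h'
      | a :: w, [], _ => exact absurd h.length_eq (by simp)
      | a :: w, b :: v, [] => exact absurd h'.length_eq (by simp)
      | a :: w, b :: v, c :: z => exact ih.sim_cons_trans (by simpa using hwN) hw h h'
    · match w, v with
      | [], v => obtain rfl := h.eq_nil; trivial
      | a :: w, [] => exact absurd h.length_eq (by simp)
      | a :: w, b :: v => exact ih.reduced_of_sim_cons (by simpa using hwN) hw h

theorem Reduced.sim_trans (hw : E.Reduced w) (h : E.Sim w v) (h' : E.Sim v t) : E.Sim w t :=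
  (coherent w.length).trans le_rfl hw h h'

theorem Reduced.of_sim (hw : E.Reduced w) (h : E.Sim w v) : E.Reduced v :=
  (coherent w.length).reduced le_rfl hw h

theorem Reduced.append {i j : S} (htr : E.Reduced t) (ht : E.HeadFree {i, j} t)
    (hu : SupportedOn {i, j} u) (hg : E.DihGeodesic {i, j} u) : E.Reduced (u ++ t) :=
  (coherent (u ++ t).length).reduced_append_of_dihGeodesic ht htr (by omega) hu hg

theorem Reduced.cancels_or_cons (hw : E.Reduced w) (a : S × Bool) :
    (∃ w', E.Sim w (invLetter a :: w')) ∨ E.Reduced (a :: w) := by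
  by_cases h : ∃ w', E.Sim w (invLetter a :: w')
  · exact .inl h
  · exact .inr ⟨hw, not_exists.1 h⟩

/-! ### The action on reduced classes -/

/-- Reduced words up to `Sim`. -/
def reducedSetoid (E : DihedralSystem S) : Setoid {w : List (S × Bool) // E.Reduced w} where
  r w v := E.Sim w.1 v.1
  iseqv := ⟨fun _ => .refl _, .symm, fun {w _ _} => w.2.sim_trans⟩

/-- The set of reduced words up to `Sim`, a model for the elements of the group on which the group
acts by left multiplication. -/
def ReducedClass (E : DihedralSystem S) : Type _ := Quotient E.reducedSetoid

/-- The class of a reduced word. -/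
def Reduced.toClass (hw : E.Reduced w) : E.ReducedClass := Quotient.mk _ ⟨w, hw⟩

theorem Reduced.toClass_eq (hw : E.Reduced w) (hv : E.Reduced v) (h : E.Sim w v) :
    hw.toClass = hv.toClass :=
  Quotient.sound (s := E.reducedSetoid) h

theorem ReducedClass.ind {motive : E.ReducedClass → Prop}
    (h : ∀ w (hw : E.Reduced w), motive hw.toClass) (x : E.ReducedClass) : motive x :=
  Quotient.inductionOn x fun w => h w.1 w.2

/-- The common length of the words of a class, which is the length of the group element. -/
def ReducedClass.length : E.ReducedClass → ℕ :=
  Quotient.lift (fun w => w.1.length) fun _ _ h => Sim.length_eq h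

open Classical in
/-- Left multiplication of a reduced word by a letter: delete the inverse letter if it can be
brought to the front, otherwise prepend the letter. -/
noncomputable def wordSMul (a : S × Bool) (w : {w : List (S × Bool) // E.Reduced w}) :
    E.ReducedClass :=
  if h : ∃ w', E.Sim w.1 (invLetter a :: w') then (w.2.of_sim h.choose_spec).1.toClass
  else Reduced.toClass (w := a :: w.1) ⟨w.2, not_exists.1 h⟩

theorem wordSMul_of_sim {w : {w : List (S × Bool) // E.Reduced w}} {w' : List (S × Bool)}
    (h : E.Sim w.1 (invLetter a :: w')) : wordSMul a w = (w.2.of_sim h).1.toClass := by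
  have hex : ∃ w', E.Sim w.1 (invLetter a :: w') := ⟨w', h⟩
  rw [wordSMul, dif_pos hex]
  exact Reduced.toClass_eq _ _
    ((w.2.of_sim hex.choose_spec).sim_trans hex.choose_spec.symm h).of_cons

theorem wordSMul_of_reduced {w : {w : List (S × Bool) // E.Reduced w}}
    (h : E.Reduced (a :: w.1)) : wordSMul a w = h.toClass :=
  dif_neg (not_exists.2 h.2)

theorem wordSMul_congr {w v : {w : List (S × Bool) // E.Reduced w}} (h : E.Sim w.1 v.1) :
    wordSMul a w = wordSMul a v := by
  rcases w.2.cancels_or_cons a with ⟨w', hw'⟩ | haw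
  · rw [wordSMul_of_sim hw', wordSMul_of_sim (v.2.sim_trans h.symm hw')]
  · rw [wordSMul_of_reduced haw, wordSMul_of_reduced (haw.of_sim (.cons a h))]
    exact Reduced.toClass_eq _ _ (.cons a h)

/-- Left multiplication of a class by a letter. -/
noncomputable def letterSMul (a : S × Bool) : E.ReducedClass → E.ReducedClass :=
  Quotient.lift (wordSMul a) fun _ _ => wordSMul_congr

theorem letterSMul_of_sim (hw : E.Reduced w) (h : E.Sim w (invLetter a :: v)) :
    letterSMul a hw.toClass = (hw.of_sim h).1.toClass :=
  wordSMul_of_sim (w := ⟨w, hw⟩) h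

theorem letterSMul_of_reduced (hw : E.Reduced w) (h : E.Reduced (a :: w)) :
    letterSMul a hw.toClass = h.toClass :=
  wordSMul_of_reduced (w := ⟨w, hw⟩) h

theorem letterSMul_invLetter_letterSMul (a : S × Bool) (x : E.ReducedClass) :
    letterSMul (invLetter a) (letterSMul a x) = x := by
  induction x using ReducedClass.ind with
  | h w hw =>
    rcases hw.cancels_or_cons a with ⟨w', h⟩ | h
    · have hr := hw.of_sim h
      rw [letterSMul_of_sim hw h, letterSMul_of_reduced hr.1 hr]
      exact Reduced.toClass_eq _ _ h.symm
    · rw [letterSMul_of_reduced hw h, letterSMul_of_sim (v := w) h (by simpa using .refl _)]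

theorem length_letterSMul_le (a : S × Bool) (x : E.ReducedClass) :
    (letterSMul a x).length ≤ x.length + 1 := by
  induction x using ReducedClass.ind with
  | h w hw =>
    rcases hw.cancels_or_cons a with ⟨w', h⟩ | h
    · rw [letterSMul_of_sim hw h]
      have hlen : w.length = w'.length + 1 := h.length_eq
      change w'.length ≤ w.length + 1
      omega
    · rw [letterSMul_of_reduced hw h]
      exact le_rfl

/-- Left multiplication by a generator, as a permutation of the classes. -/
noncomputable def genPerm (i : S) : Equiv.Perm E.ReducedClass where
  toFun := letterSMul (i, true)
  invFun := letterSMul (i, false)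
  left_inv := letterSMul_invLetter_letterSMul (i, true)
  right_inv := letterSMul_invLetter_letterSMul (i, false)

/-- The action of the free group on the classes of reduced words. -/
noncomputable def action (E : DihedralSystem S) : FreeGroup S →* Equiv.Perm E.ReducedClass :=
  FreeGroup.lift genPerm

theorem action_mk_cons (a : S × Bool) (u : List (S × Bool)) (x : E.ReducedClass) :
    E.action (.mk (a :: u)) x = letterSMul a (E.action (.mk u) x) := by
  rcases a with ⟨i, _ | _⟩ <;> rfl

theorem length_action_le (u : List (S × Bool)) (x : E.ReducedClass) :
    (E.action (.mk u) x).length ≤ u.length + x.length := by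
  induction u with
  | nil => exact (Nat.zero_add _).ge
  | cons a u ih =>
    have hle := length_letterSMul_le a (E.action (.mk u) x)
    rw [action_mk_cons, List.length_cons]
    omega

theorem action_toClass : ∀ {u t : List (S × Bool)} (h : E.Reduced (u ++ t)),
    E.action (.mk u) h.of_append.toClass = h.toClass
  | [], _, _ => rfl
  | a :: u, t, h => by
    rw [action_mk_cons, action_toClass h.1, letterSMul_of_reduced h.1 h]

/-- On the coset of a gate, the dihedral group acts as on itself. -/
theorem exists_action_toClass {i j : S} (hij : i ≠ j) (ht : E.HeadFree {i, j} t)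
    (htr : E.Reduced t) : ∀ {u : List (S × Bool)}, SupportedOn {i, j} u →
      ∃ u', ∃ hr : E.Reduced (u' ++ t), SupportedOn {i, j} u' ∧ E.DihGeodesic {i, j} u' ∧
        E.DihEq {i, j} u u' ∧ E.action (.mk u) htr.toClass = hr.toClass
  | [], _ => ⟨[], htr, .nil, fun v _ _ => by simp, .refl _, rfl⟩
  | a :: p, hu => by
    obtain ⟨ha, hp⟩ := SupportedOn.cons_iff.1 hu
    obtain ⟨p', hr, hp', hg, hd, heq⟩ := exists_action_toClass hij ht htr hp
    rcases hr.cancels_or_cons a with ⟨w, h⟩ | h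
    · have hw := (hr.of_sim h).1
      have hN := coherent (E := E) (p' ++ t).length
      have hN' := coherent (E := E) w.length
      obtain ⟨q, t', hgate, -⟩ := hN'.exists_isGate {i, j} le_rfl hw
      have hgate' := hN.isGate_append (u := [invLetter a]) le_rfl hr h (.cons ha .nil) hgate
      obtain ⟨hpq, htt, hlen⟩ := hN.isGate_unique le_rfl hr ⟨hp', ht, .refl _⟩ hgate'
      have hwq : E.Sim w (q ++ t) := hw.sim_trans hgate.sim (htt.symm.append_left q)
      refine ⟨q, hw.of_sim hwq, hgate.supp, (hg.of_dihEq hpq hlen).tail (a := invLetter a) ha,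
        by simpa using DihEq.cons_left_iff.2 (hd.trans hpq), ?_⟩
      rw [action_mk_cons, heq, letterSMul_of_sim _ h]
      exact Reduced.toClass_eq _ _ hwq
    · refine ⟨a :: p', h, .cons ha hp', h.dihGeodesic hij t (.cons ha hp'), hd.cons, ?_⟩
      rw [action_mk_cons, heq, letterSMul_of_reduced hr h]

theorem action_eq_of_dihEq {i j : S} (hij : i ≠ j) (hu : SupportedOn {i, j} u)
    (hv : SupportedOn {i, j} v) (hd : E.DihEq {i, j} u v) :
    E.action (.mk u) = E.action (.mk v) := by
  ext1 x
  induction x using ReducedClass.ind with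
  | h w hw =>
    obtain ⟨r, t, hg, ht⟩ := (coherent w.length).exists_isGate {i, j} le_rfl hw
    have hrt := hw.of_sim hg.sim
    have hclass : hw.toClass = E.action (.mk r) ht.toClass :=
      (Reduced.toClass_eq _ _ hg.sim).trans (action_toClass hrt).symm
    obtain ⟨u', hur, hu', hgu, hdu, hau⟩ :=
      exists_action_toClass hij hg.headFree ht (hu.append hg.supp)
    obtain ⟨v', hvr, hv', hgv, hdv, hav⟩ :=
      exists_action_toClass hij hg.headFree ht (hv.append hg.supp)
    have hd' : E.DihEq {i, j} u' v' := hdu.symm.trans ((hd.append_right r).trans hdv)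
    have hlen : u'.length = v'.length := le_antisymm (hgu _ hv' hd') (hgv _ hu' hd'.symm)
    rw [hclass, ← Equiv.Perm.mul_apply, ← Equiv.Perm.mul_apply, ← map_mul, ← map_mul,
      FreeGroup.mul_mk, FreeGroup.mul_mk, hau, hav]
    exact Reduced.toClass_eq _ _ (sim_of_dihEq hij t hu' hv' hlen hgu hd')

section Map

variable {G : Type*} [Group G] (φ : FreeGroup S →* G)
  (hφ : ∀ {i j : S} {u v : List (S × Bool)}, i ≠ j → E.DihEq {i, j} u v →
    φ (.mk u) = φ (.mk v))

include hφ

theorem Sim.map_mk_eq (h : E.Sim w v) : φ (.mk w) = φ (.mk v) := by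
  have map_append (u t : List (S × Bool)) : φ (.mk (u ++ t)) = φ (.mk u) * φ (.mk t) := by
    rw [← FreeGroup.mul_mk, map_mul]
  induction h with
  | nil => rfl
  | @cons a w v _ ih => rw [← List.singleton_append, map_append, ih, ← map_append]; rfl
  | @exchange a b p q t w v hab _ _ _ hd _ _ ihw ihv =>
    calc φ (.mk (a :: w)) = φ (.mk (a :: p)) * φ (.mk t) := by
          rw [← List.singleton_append, map_append, ihw, ← map_append, ← map_append]; rfl
      _ = φ (.mk (b :: v)) := by
          rw [hφ hab hd, ← List.singleton_append (l := v), map_append, ihv, ← map_append,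
            ← map_append]; rfl

theorem exists_reduced_map_mk_eq (u : List (S × Bool)) :
    ∃ w, E.Reduced w ∧ φ (.mk w) = φ (.mk u) := by
  induction u with
  | nil => exact ⟨[], trivial, rfl⟩
  | cons a u ih =>
    obtain ⟨w, hw, hwu⟩ := ih
    have hmap : φ (.mk (a :: w)) = φ (.mk (a :: u)) := by
      rw [← List.singleton_append, ← List.singleton_append (l := u), ← FreeGroup.mul_mk,
        ← FreeGroup.mul_mk, map_mul, map_mul, hwu]
    rcases hw.cancels_or_cons a with ⟨w', h⟩ | h
    · refine ⟨w', (hw.of_sim h).1, hmap ▸ ?_⟩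
      have haw : E.Sim (a :: w) (a :: invLetter a :: w') := .cons a h
      rw [haw.map_mk_eq φ hφ, mk_cons_invLetter_cons]
    · exact ⟨a :: w, h, hmap⟩

end Map

end DihedralSystem

/-! ### Normal forms in dihedral Artin groups -/

/-- The last letter of the alternating word of length `n` over `Bool` which starts with `c`; as a
convention, that of the empty word is `!c`. -/
def lastLetter (n : ℕ) (c : Bool) : Bool := n.bodd == c

@[simp] theorem lastLetter_zero (c : Bool) : lastLetter 0 c = !c := by simp [lastLetter]

@[simp] theorem lastLetter_succ (n : ℕ) (c : Bool) :
    lastLetter (n + 1) c = lastLetter n (!c) := by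
  simp [lastLetter, Nat.bodd_succ]

theorem lastLetter_not (n : ℕ) (c : Bool) : lastLetter n (!c) = !lastLetter n c := by
  unfold lastLetter; cases n.bodd <;> cases c <;> rfl

@[simp] theorem lastLetter_lastLetter (n : ℕ) (c : Bool) : lastLetter n (lastLetter n c) = c := by
  unfold lastLetter; cases n.bodd <;> cases c <;> rfl

theorem lastLetter_comm (n k : ℕ) (c : Bool) :
    lastLetter n (lastLetter k c) = lastLetter k (lastLetter n c) := by
  unfold lastLetter; cases n.bodd <;> cases k.bodd <;> cases c <;> rfl

theorem altProd_succ_right {G : Type*} [Monoid G] (g : Bool → G) (n : ℕ) (c : Bool) :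
    altProd (n + 1) (g c) (g !c) = altProd n (g c) (g !c) * g (lastLetter (n + 1) c) := by
  induction n generalizing c with
  | zero => simp [altProd]
  | succ n ih =>
    have ih := ih (!c)
    rw [Bool.not_not] at ih
    rw [altProd, ih, ← mul_assoc, lastLetter_succ (n + 1)]
    rfl

/-- The candidates for Garside normal forms in the Artin group on two generators, indexed by `Bool`,
with Garside element `Δ`. The state stands for the product of alternating words with lengths
`factors` and of `Δ ^ (-deltaInv)`, where the first alternating word starts with `start` and each
of the others with the last letter of the preceding one. -/
@[ext] structure GarsideForm where
  /-- The first letter. -/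
  start : Bool
  /-- The lengths of the alternating factors. -/
  factors : List ℕ
  /-- The exponent of `Δ⁻¹`. -/
  deltaInv : ℤ

namespace GarsideForm

/-- The normal form of the identity. -/
protected def one : GarsideForm := ⟨true, [], 0⟩

/-- The normal form with given data, whose first letter is set to `true` if there is no factor. -/
def normalize (b : Bool) (t : List ℕ) (k : ℤ) : GarsideForm := ⟨b || t.isEmpty, t, k⟩

@[simp] theorem normalize_nil (b : Bool) (k : ℤ) : normalize b [] k = ⟨true, [], k⟩ := by
  simp [normalize]

@[simp] theorem normalize_cons (b : Bool) (l : ℕ) (t : List ℕ) (k : ℤ) :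
    normalize b (l :: t) k = ⟨b, l :: t, k⟩ := by
  simp [normalize]

/-- A Garside normal form: every factor is a proper nonempty prefix of `Δ`, and the irrelevant first
letter of a power of `Δ` is `true`. -/
structure IsNormal (m : ℕ) (y : GarsideForm) : Prop where
  factor_mem : ∀ l ∈ y.factors, 1 ≤ l ∧ l < m
  start_of_nil : y.factors = [] → y.start = true

variable {m : ℕ}

theorem isNormal_one : IsNormal m .one := ⟨by simp [GarsideForm.one], fun _ => rfl⟩

theorem isNormal_cons_iff {b : Bool} {l : ℕ} {t : List ℕ} {k : ℤ} :
    IsNormal m ⟨b, l :: t, k⟩ ↔ (1 ≤ l ∧ l < m) ∧ ∀ l' ∈ t, 1 ≤ l' ∧ l' < m :=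
  ⟨fun h => List.forall_mem_cons.1 h.factor_mem, fun h => ⟨List.forall_mem_cons.2 h, by simp⟩⟩

theorem isNormal_normalize {b : Bool} {t : List ℕ} {k : ℤ} (h : ∀ l ∈ t, 1 ≤ l ∧ l < m) :
    IsNormal m (normalize b t k) :=
  ⟨h, fun ht => by simp [normalize, show t = [] from ht]⟩

/-- Left multiplication of a normal form by a letter. -/
def step (m : ℕ) : Bool × Bool → GarsideForm → GarsideForm
  | (a, true), ⟨_, [], k⟩ => ⟨a, [1], k⟩
  | (a, true), ⟨b, l :: t, k⟩ =>
    if b = a then ⟨a, 1 :: l :: t, k⟩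
    else if l + 1 < m then ⟨a, (l + 1) :: t, k⟩ else normalize b t (k - 1)
  | (a, false), ⟨_, [], k⟩ => ⟨!a, [m - 1], k + 1⟩
  | (a, false), ⟨b, l :: t, k⟩ =>
    if b = a then if l = 1 then normalize a t k else ⟨!a, (l - 1) :: t, k⟩
    else ⟨b, (m - 1) :: l :: t, k + 1⟩

/-- The normal form obtained from the letters of a word. -/
def ofWord (m : ℕ) (w : List (Bool × Bool)) : GarsideForm := w.foldr (step m) .one

@[simp] theorem ofWord_cons (x : Bool × Bool) (w : List (Bool × Bool)) :
    ofWord m (x :: w) = step m x (ofWord m w) := rfl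

variable {x : Bool × Bool} {y : GarsideForm} {w : List (Bool × Bool)}

theorem IsNormal.step (hm : 3 ≤ m) (hy : IsNormal m y) : IsNormal m (step m x y) := by
  obtain ⟨a, s⟩ := x
  obtain ⟨b, _ | ⟨l, t⟩, k⟩ := y
  · cases s <;> simp only [GarsideForm.step, isNormal_cons_iff] <;> simp <;> omega
  · obtain ⟨hl, ht⟩ := isNormal_cons_iff.1 hy
    cases s <;> simp only [GarsideForm.step] <;> split_ifs
    all_goals first
      | exact isNormal_normalize ht
      | exact isNormal_cons_iff.2 ⟨by omega, ht⟩
      | exact isNormal_cons_iff.2 ⟨by omega, List.forall_mem_cons.2 ⟨hl, ht⟩⟩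

theorem step_invLetter_step (hm : 3 ≤ m) (hy : IsNormal m y) (x : Bool × Bool) :
    step m (invLetter x) (step m x y) = y := by
  obtain ⟨a, s⟩ := x
  obtain ⟨b, _ | ⟨l, t⟩, k⟩ := y
  · obtain rfl : b = true := hy.start_of_nil rfl
    cases s <;> simp [step, invLetter, show ¬ m - 1 + 1 < m by omega]
  · obtain ⟨hl, ht⟩ := isNormal_cons_iff.1 hy
    by_cases hb : b = a
    · subst hb
      cases s
      · by_cases h1 : l = 1
        · cases t <;> simp [step, invLetter, h1]
        · simp [step, invLetter, h1, show l - 1 + 1 = l by omega, hl.2]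
      · simp [step, invLetter]
    · obtain rfl : b = !a := by simpa [Bool.eq_not] using hb
      cases s
      · simp [step, invLetter, show ¬ m - 1 + 1 < m by omega]
      · by_cases h1 : l + 1 < m
        · simp [step, invLetter, h1, show l ≠ 0 by omega]
        · cases t <;> simp [step, invLetter, h1, show m - 1 = l by omega]

/-- Left multiplication by a letter, as a permutation of the normal forms. -/
def stepPerm (hm : 3 ≤ m) (x : Bool × Bool) : Equiv.Perm {y // IsNormal m y} where
  toFun y := ⟨step m x y, y.2.step hm⟩
  invFun y := ⟨step m (invLetter x) y, y.2.step hm⟩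
  left_inv y := Subtype.ext (step_invLetter_step hm y.2 x)
  right_inv y := Subtype.ext <| by
    simpa only [invLetter_invLetter] using step_invLetter_step hm y.2 (invLetter x)

theorem isNormal_ofWord (hm : 3 ≤ m) (w : List (Bool × Bool)) : IsNormal m (ofWord m w) := by
  induction w with
  | nil => exact isNormal_one
  | cons x w ih => exact ih.step hm

theorem coe_lift_stepPerm_mk (hm : 3 ≤ m) (w : List (Bool × Bool)) :
    (FreeGroup.lift (fun b => stepPerm hm (b, true)) (.mk w) ⟨.one, isNormal_one⟩).1 =
      ofWord m w := by
  induction w with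
  | nil => simp [ofWord]
  | cons x w ih =>
    rw [FreeGroup.lift_mk] at ih ⊢
    rw [List.map_cons, List.prod_cons, Equiv.Perm.mul_apply, ofWord_cons, ← ih]
    obtain ⟨b, _ | _⟩ := x <;> rfl

/-- Left multiplication of a normal form by the Garside element `Δ`, conjugation by which maps the
generator `b` to `lastLetter m (!b)`. -/
def deltaMul (m : ℕ) (y : GarsideForm) : GarsideForm :=
  normalize (lastLetter m (!y.start)) y.factors (y.deltaInv - 1)

theorem deltaMul_step (a : Bool) (y : GarsideForm) :
    deltaMul m (step m (a, true) y) = step m (lastLetter m (!a), true) (deltaMul m y) := by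
  have hinj (b : Bool) : lastLetter m (!b) = lastLetter m (!a) ↔ b = a := by
    unfold lastLetter; cases m.bodd <;> cases a <;> cases b <;> decide
  obtain ⟨b, _ | ⟨l, t⟩, k⟩ := y
  · simp [deltaMul, step]
  · by_cases hb : b = a
    · simp [deltaMul, step, hb]
    · by_cases hl : l + 1 < m
      · simp [deltaMul, step, hb, hinj, hl]
      · cases t <;> simp [deltaMul, step, hb, hinj, hl]

theorem coe_altProd_stepPerm_of_lt (hm : 3 ≤ m) {n : ℕ} (hn : n + 1 < m) (c : Bool)
    (y : {y // IsNormal m y}) (h : y.1.factors ≠ [] → y.1.start = lastLetter (n + 1) c) :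
    (altProd (n + 1) (stepPerm hm (c, true)) (stepPerm hm (!c, true)) y).1 =
      ⟨c, (n + 1) :: y.1.factors, y.1.deltaInv⟩ := by
  induction n generalizing c with
  | zero =>
    obtain ⟨⟨b, _ | ⟨l, t⟩, k⟩, hy⟩ := y
    · rfl
    · obtain rfl : b = c := by simpa using h (by simp)
      simp [altProd, stepPerm, step]
  | succ n ih =>
    have ih := ih (by omega) (!c) (by simpa only [lastLetter_succ (n + 1)] using h)
    rw [Bool.not_not] at ih
    rw [altProd, Equiv.Perm.mul_apply]
    change step m (c, true) (Subtype.val _) = _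
    rw [ih]
    simp [step, hn]

theorem coe_altProd_stepPerm_of_lastLetter (hm : 3 ≤ m) (c : Bool) (y : {y // IsNormal m y})
    (h : y.1.factors ≠ [] → y.1.start = lastLetter m c) :
    (altProd m (stepPerm hm (c, true)) (stepPerm hm (!c, true)) y).1 = deltaMul m y := by
  obtain ⟨n, rfl⟩ : ∃ n, m = n + 2 := ⟨m - 2, by omega⟩
  have key := coe_altProd_stepPerm_of_lt hm (n := n) (by omega) (!c) y
    (by simpa only [lastLetter_succ (n + 1)] using h)
  rw [Bool.not_not] at key
  rw [altProd, Equiv.Perm.mul_apply]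
  change step _ (c, true) (Subtype.val _) = _
  rw [key]
  obtain ⟨⟨b, t, k⟩, hy⟩ := y
  cases t with
  | nil => simp [step, deltaMul]
  | cons l t =>
    obtain rfl : b = lastLetter (n + 2) c := h (by simp)
    simp [step, deltaMul, lastLetter_not]

theorem start_step_start_or_headD_step_start_lt (hy : IsNormal m y) (hne : y.factors ≠ []) :
    ((step m (y.start, false) y).factors ≠ [] → (step m (y.start, false) y).start = y.start) ∨
      (step m (y.start, false) y).factors.headD 0 < y.factors.headD 0 := by
  obtain ⟨b, _ | ⟨l, t⟩, k⟩ := y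
  · exact absurd rfl hne
  · have hl := (isNormal_cons_iff.1 hy).1
    by_cases h1 : l = 1
    · cases t <;> simp [step, h1]
    · simp [step, h1]
      omega

theorem coe_altProd_stepPerm (hm : 3 ≤ m) (c : Bool) (y : {y // IsNormal m y}) :
    (altProd m (stepPerm hm (c, true)) (stepPerm hm (!c, true)) y).1 = deltaMul m y := by
  by_cases h : y.1.factors ≠ [] → y.1.start = lastLetter m c
  · exact coe_altProd_stepPerm_of_lastLetter hm c y h
  -- The alternating word followed by the first letter of `y` is again an alternating word, whose
  -- tail acts on the remainder `z` of `y`.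
  obtain ⟨hne, hb⟩ := Classical.not_imp.1 h
  have hb : y.1.start = lastLetter m (!c) := by
    rw [lastLetter_not, Bool.eq_not]
    exact hb
  let z := (stepPerm hm (y.1.start, true))⁻¹ y
  have hy : stepPerm hm (y.1.start, true) z = y := by simp [z]
  have hz : (z.1.factors ≠ [] → z.1.start = lastLetter m (!c)) ∨
      z.1.factors.headD 0 < y.1.factors.headD 0 :=
    hb ▸ start_step_start_or_headD_step_start_lt y.2 hne
  have hzc : (altProd m (stepPerm hm (!c, true)) (stepPerm hm (c, true)) z).1 = deltaMul m z := by
    rcases hz with hstart | _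
    · simpa only [Bool.not_not] using coe_altProd_stepPerm_of_lastLetter hm (!c) z hstart
    · simpa only [Bool.not_not] using coe_altProd_stepPerm hm (!c) z
  have hsucc := altProd_succ_right (fun a => stepPerm hm (a, true)) m c
  rw [lastLetter_succ, ← hb] at hsucc
  calc (altProd m (stepPerm hm (c, true)) (stepPerm hm (!c, true)) y).1
      = ((altProd m (stepPerm hm (c, true)) (stepPerm hm (!c, true)) *
          stepPerm hm (y.1.start, true)) z).1 := by rw [Equiv.Perm.mul_apply, hy]
    _ = step m (c, true) (altProd m (stepPerm hm (!c, true)) (stepPerm hm (c, true)) z) := by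
      rw [← hsucc]; rfl
    _ = step m (c, true) (deltaMul m z) := by rw [hzc]
    _ = deltaMul m (step m (y.1.start, true) z) := by
      rw [deltaMul_step, hb, lastLetter_not, lastLetter_lastLetter, Bool.not_not]
    _ = deltaMul m y := congrArg (fun y => deltaMul m (Subtype.val y)) hy
termination_by y.1.factors.headD 0
decreasing_by assumption

theorem altProd_stepPerm_comm (hm : 3 ≤ m) :
    altProd m (stepPerm hm (true, true)) (stepPerm hm (false, true)) =
      altProd m (stepPerm hm (false, true)) (stepPerm hm (true, true)) := by
  ext1 y
  exact Subtype.ext <|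
    (coe_altProd_stepPerm hm true y).trans (coe_altProd_stepPerm hm false y).symm

section Eval

variable {Q : Type*} [Group Q] {g : Bool → Q}

/-- The product of successive alternating words with lengths `t`, the first of which starts with
`b` and each of the others with the last letter of the preceding one. -/
def evalFactors (g : Bool → Q) : Bool → List ℕ → Q
  | _, [] => 1
  | b, l :: t => altProd l (g b) (g !b) * evalFactors g (lastLetter l b) t

/-- The element represented by a normal form. -/
def eval (m : ℕ) (g : Bool → Q) (y : GarsideForm) : Q :=
  evalFactors g y.start y.factors * altProd m (g true) (g false) ^ (-y.deltaInv)

theorem eval_normalize (b : Bool) (t : List ℕ) (k : ℤ) :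
    eval m g (normalize b t k) = eval m g ⟨b, t, k⟩ := by
  cases t <;> simp [eval, evalFactors]

variable (hg : altProd m (g true) (g false) = altProd m (g false) (g true))
include hg

theorem altProd_bool (c : Bool) : altProd m (g c) (g !c) = altProd m (g true) (g false) := by
  cases c
  · exact hg.symm
  · rfl

theorem semiconjBy_altProd (e : Bool) :
    SemiconjBy (altProd m (g true) (g false)) (g e) (g (lastLetter m !e)) := by
  set d := lastLetter m !e with hd
  have hlast : lastLetter (m + 1) d = e := by
    rw [lastLetter_succ, lastLetter_not, hd, lastLetter_lastLetter, Bool.not_not]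
  have hd' : altProd m (g !d) (g d) = altProd m (g true) (g false) := by
    simpa only [Bool.not_not] using altProd_bool hg (!d)
  calc altProd m (g true) (g false) * g e
      = altProd m (g d) (g !d) * g (lastLetter (m + 1) d) := by rw [altProd_bool hg, hlast]
    _ = g d * altProd m (g !d) (g d) := (altProd_succ_right g m d).symm
    _ = g d * altProd m (g true) (g false) := by rw [hd']

theorem semiconjBy_altProd_altProd (l : ℕ) (e : Bool) :
    SemiconjBy (altProd m (g true) (g false)) (altProd l (g e) (g !e))
      (altProd l (g (lastLetter m !e)) (g !(lastLetter m !e))) := by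
  induction l generalizing e with
  | zero => exact .one_right _
  | succ l ih =>
    have ih := ih (!e)
    rw [lastLetter_not m (!e), Bool.not_not, Bool.not_not] at ih
    exact (semiconjBy_altProd hg e).mul_right ih

theorem semiconjBy_altProd_evalFactors (t : List ℕ) (e : Bool) :
    SemiconjBy (altProd m (g true) (g false)) (evalFactors g e t)
      (evalFactors g (lastLetter m !e) t) := by
  induction t generalizing e with
  | nil => exact .one_right _
  | cons l t ih =>
    refine (semiconjBy_altProd_altProd hg l e).mul_right ?_
    rw [lastLetter_comm, lastLetter_not l]
    exact ih (lastLetter l e)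

theorem eval_step_pos (hy : IsNormal m y) (a : Bool) :
    eval m g (step m (a, true) y) = g a * eval m g y := by
  obtain ⟨b, _ | ⟨l, t⟩, k⟩ := y
  · simp [step, eval, evalFactors, altProd]
  obtain ⟨hl, -⟩ := isNormal_cons_iff.1 hy
  by_cases hb : b = a
  · subst hb
    simp [step, eval, evalFactors, altProd, mul_assoc]
  obtain rfl : b = !a := by simpa [Bool.eq_not] using hb
  by_cases h : l + 1 < m
  · simp [step, h, eval, evalFactors, altProd, mul_assoc]
  obtain rfl : m = l + 1 := by omega
  have hdelta : g a * altProd l (g !a) (g a) = altProd (l + 1) (g true) (g false) :=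
    altProd_bool hg a
  have hsemi := (semiconjBy_altProd_evalFactors hg t (lastLetter l !a)).eq
  rw [lastLetter_succ, Bool.not_not, lastLetter_lastLetter] at hsemi
  simp only [step, Bool.not_eq_eq_eq_not, Bool.eq_not_self, if_false, if_neg h, eval_normalize]
  simp only [eval, evalFactors, Bool.not_not]
  rw [← mul_assoc, ← mul_assoc, hdelta, hsemi, mul_assoc, ← zpow_one_add]
  congr 2
  ring

theorem eval_step (hm : 3 ≤ m) (hy : IsNormal m y) :
    eval m g (step m x y) = cond x.2 (g x.1) (g x.1)⁻¹ * eval m g y := by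
  obtain ⟨a, _ | _⟩ := x
  · have h := eval_step_pos hg (hy.step (x := (a, false)) hm) a
    have hcancel : step m (a, true) (step m (a, false) y) = y :=
      step_invLetter_step hm hy (a, false)
    rw [hcancel] at h
    simp [h]
  · exact eval_step_pos hg hy a

theorem eval_ofWord (hm : 3 ≤ m) (w : List (Bool × Bool)) :
    eval m g (ofWord m w) = FreeGroup.lift g (.mk w) := by
  induction w with
  | nil => simp [ofWord, GarsideForm.one, eval, evalFactors]
  | cons x w ih =>
    rw [ofWord_cons, eval_step hg hm (isNormal_ofWord hm w), ih, FreeGroup.lift_mk,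
      FreeGroup.lift_mk, List.map_cons, List.prod_cons]

end Eval

/-- The contribution of an alternating factor of length `l` to the height: `l` positive letters, of
which the first `θ` count with sign `1` and the others with sign `-1`. -/
def profile (θ l : ℕ) : ℤ := 2 * (min θ l : ℕ) - l

/-- A lower bound for the word length, one for each cutoff `θ ≤ m`: multiplication by a letter
changes the height by `1` or `-1`. -/
def height (m θ : ℕ) (y : GarsideForm) : ℤ :=
  (y.factors.map (profile θ)).sum - y.deltaInv * (2 * θ - m)

@[simp] theorem height_nil (θ : ℕ) (b : Bool) (k : ℤ) :
    height m θ ⟨b, [], k⟩ = -k * (2 * θ - m) := by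
  simp [height]

@[simp] theorem height_cons (θ : ℕ) (b : Bool) (l : ℕ) (t : List ℕ) (k : ℤ) :
    height m θ ⟨b, l :: t, k⟩ =
      profile θ l + (t.map (profile θ)).sum - k * (2 * θ - m) := by
  simp [height]

theorem height_normalize (θ : ℕ) (b : Bool) (t : List ℕ) (k : ℤ) :
    height m θ (normalize b t k) = (t.map (profile θ)).sum - k * (2 * θ - m) := rfl

/-- The number with which the cutoff has to be compared in order to decide whether a letter raises
or lowers the height. -/
def threshold (m : ℕ) (x : Bool × Bool) (y : GarsideForm) : ℕ :=
  if y.start = x.1 then if x.2 then 0 else y.factors.headD m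
  else if x.2 then y.factors.headD 0 else m

/-- Whether a letter raises the height of a normal form. -/
def Raises (m θ : ℕ) (x : Bool × Bool) (y : GarsideForm) : Prop :=
  if x.2 then threshold m x y < θ else θ < threshold m x y

variable {θ : ℕ}

theorem height_step (hm : 3 ≤ m) (hθ : θ ≤ m) (hy : IsNormal m y) :
    (Raises m θ x y → height m θ (step m x y) = height m θ y + 1) ∧
      (¬ Raises m θ x y → height m θ (step m x y) = height m θ y - 1) := by
  obtain ⟨a, s⟩ := x
  obtain ⟨b, _ | ⟨l, t⟩, k⟩ := y
  · obtain rfl : b = true := hy.start_of_nil rfl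
    cases s <;> simp only [step, Raises, threshold, height_nil, height_cons, profile] <;> grind
  · obtain ⟨hl, -⟩ := isNormal_cons_iff.1 hy
    cases s <;> simp only [step] <;> split_ifs <;>
      simp only [Raises, threshold, height_cons, height_normalize, List.map_cons, List.sum_cons,
        profile] <;>
      grind

theorem height_ofWord_le (hm : 3 ≤ m) (hθ : θ ≤ m) (w : List (Bool × Bool)) :
    height m θ (ofWord m w) ≤ w.length := by
  induction w with
  | nil => simp [ofWord, GarsideForm.one]
  | cons x w ih =>
    obtain ⟨hr, hl⟩ := height_step (x := x) hm hθ (isNormal_ofWord hm w)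
    rw [ofWord_cons, List.length_cons]
    by_cases h : Raises m θ x (ofWord m w) <;> grind

theorem Raises.or_invLetter (hm : 3 ≤ m) (hy : IsNormal m y) (θ : ℕ) (x : Bool × Bool) :
    Raises m θ x y ∨ Raises m θ (invLetter x) y := by
  obtain ⟨a, s⟩ := x
  obtain ⟨b, _ | ⟨l, t⟩, k⟩ := y
  · grind [Raises, threshold, invLetter]
  · have hl := (isNormal_cons_iff.1 hy).1
    grind [Raises, threshold, invLetter]

theorem two_dvd_height_sub_height (θ θ' : ℕ) (y : GarsideForm) :
    2 ∣ height m θ y - height m θ' y := by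
  have hsum (t : List ℕ) : 2 ∣ (t.map (profile θ)).sum - (t.map (profile θ')).sum := by
    induction t with
    | nil => simp
    | cons l t ih =>
      simp only [List.map_cons, List.sum_cons, profile]
      omega
  obtain ⟨c, hc⟩ := hsum y.factors
  exact ⟨c - y.deltaInv * (θ - θ'), by unfold height; linear_combination hc⟩

theorem profile_concave {α β γ : ℕ} (hαγ : α ≤ γ) (hγβ : γ ≤ β) (l : ℕ) :
    ((β : ℤ) - γ) * profile α l + (γ - α) * profile β l ≤ (β - α) * profile γ l := by
  unfold profile
  rcases le_total γ l with h | h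
  · have hβ : ((min β l : ℕ) : ℤ) ≤ β := by omega
    rw [min_eq_left h, min_eq_left (hαγ.trans h)]
    nlinarith
  · have hα : ((min α l : ℕ) : ℤ) ≤ l := by omega
    rw [min_eq_right h, min_eq_right (h.trans hγβ)]
    nlinarith

theorem sum_profile_concave {α β γ : ℕ} (hαγ : α ≤ γ) (hγβ : γ ≤ β) (t : List ℕ) :
    ((β : ℤ) - γ) * (t.map (profile α)).sum + (γ - α) * (t.map (profile β)).sum ≤
      (β - α) * (t.map (profile γ)).sum := by
  induction t with
  | nil => simp
  | cons l t ih =>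
    simp only [List.map_cons, List.sum_cons]
    linarith [profile_concave hαγ hγβ l]

theorem height_strictConcave_head {α β l : ℕ} (hα : α < l) (hβ : l < β) (b : Bool) (t : List ℕ)
    (k : ℤ) : ((β : ℤ) - l) * height m α ⟨b, l :: t, k⟩ + (l - α) * height m β ⟨b, l :: t, k⟩ <
      (β - α) * height m l ⟨b, l :: t, k⟩ := by
  have hl : ((β : ℤ) - l) * profile α l + (l - α) * profile β l < (β - α) * profile l l := by
    unfold profile
    rw [min_self, min_eq_left hα.le, min_eq_right hβ.le]
    nlinarith
  simp only [height_cons]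
  linarith [sum_profile_concave hα.le hβ.le t]

/-- If the height is at most `h + 1` for all cutoffs, a letter lowers it where it is `h + 1`. -/
theorem exists_not_raises (hy : IsNormal m y) {h : ℤ} (h0 : 0 ≤ h)
    (hle : ∀ θ ≤ m, height m θ y ≤ h + 1) :
    ∃ x, ∀ θ ≤ m, height m θ y = h + 1 → ¬ Raises m θ x y := by
  obtain ⟨b, _ | ⟨l, t⟩, k⟩ := y
  · obtain rfl : b = true := hy.start_of_nil rfl
    rcases lt_trichotomy k 0 with hk | rfl | hk
    · refine ⟨(true, false), fun θ _ heq => ?_⟩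
      have hm' := hle m le_rfl
      rw [height_nil] at hm' heq
      suffices m ≤ θ by simpa [Raises, threshold] using this
      nlinarith
    · exact ⟨(true, true), fun θ _ heq => by rw [height_nil] at heq; omega⟩
    · refine ⟨(true, true), fun θ _ heq => ?_⟩
      have h0' := hle 0 m.zero_le
      rw [height_nil] at h0' heq
      suffices θ ≤ 0 by simpa [Raises, threshold] using this
      push_cast at h0'
      nlinarith
  · by_cases hge : ∀ θ ≤ m, height m θ ⟨b, l :: t, k⟩ = h + 1 → l ≤ θ
    · refine ⟨(b, false), fun θ hθ heq => ?_⟩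
      simpa [Raises, threshold] using hge θ hθ heq
    · simp only [not_forall, not_le] at hge
      obtain ⟨α, -, hα, hαl⟩ := hge
      refine ⟨(!b, true), fun β hβ heq hr => ?_⟩
      have hlβ : l < β := by simpa [Raises, threshold] using hr
      have hconc := height_strictConcave_head (m := m) hαl hlβ b t k
      have hl := hle l (by omega)
      rw [hα, heq] at hconc
      nlinarith

theorem height_self (hy : IsNormal m y) : height m m y = -height m 0 y := by
  have hsum (t : List ℕ) (ht : ∀ l ∈ t, 1 ≤ l ∧ l < m) :
      (t.map (profile m)).sum = -(t.map (profile 0)).sum := by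
    rw [List.sum_neg, List.map_map]
    congr 1
    refine List.map_congr_left fun l hl => ?_
    have := ht l hl
    simp only [profile, Function.comp_apply]
    omega
  rw [height, height, hsum _ hy.factor_mem]
  push_cast
  ring

theorem eq_one_of_height_nonpos (hm : 3 ≤ m) (hy : IsNormal m y)
    (hle : ∀ θ ≤ m, height m θ y ≤ 0) : y = .one := by
  have h_zero := hle 0 m.zero_le
  have h_self := hle m le_rfl
  rw [height_self hy] at h_self
  obtain ⟨b, _ | ⟨l, t⟩, k⟩ := y
  · obtain rfl : b = true := hy.start_of_nil rfl
    rw [height_nil] at h_zero h_self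
    obtain rfl : k = 0 := by
      push_cast at h_zero h_self
      nlinarith
    rfl
  · have hl := (isNormal_cons_iff.1 hy).1
    have hconc := height_strictConcave_head (m := m) (show 0 < l by omega) hl.2 b t k
    have h_head := hle l hl.2.le
    rw [height_self hy, show height m 0 ⟨b, l :: t, k⟩ = 0 by omega] at hconc
    push_cast at hconc
    nlinarith

theorem exists_ofWord_eq_of_height_le (hm : 3 ≤ m) (hy : IsNormal m y) (N : ℕ)
    (hle : ∀ θ ≤ m, height m θ y ≤ N) : ∃ w, w.length ≤ N ∧ ofWord m w = y := by
  induction N generalizing y with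
  | zero => exact ⟨[], le_rfl, (eq_one_of_height_nonpos hm hy hle).symm⟩
  | succ N ih =>
    by_cases hmax : ∃ θ ≤ m, height m θ y = N + 1
    · obtain ⟨θ₀, -, hθ₀⟩ := hmax
      obtain ⟨x, hx⟩ := exists_not_raises hy N.cast_nonneg (mod_cast hle)
      have hstep : ∀ θ ≤ m, height m θ (step m x y) ≤ N := fun θ hθ => by
        obtain ⟨hr, hl⟩ := height_step (x := x) hm hθ hy
        have hN := hle θ hθ
        have hpar := two_dvd_height_sub_height (m := m) θ θ₀ y
        by_cases hraise : Raises m θ x y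
        · have := mt (hx θ hθ) (not_not.2 hraise)
          have := hr hraise
          omega
        · have := hl hraise
          omega
      obtain ⟨w, hw, hwy⟩ := ih (hy.step hm) hstep
      refine ⟨invLetter x :: w, by simpa using hw, ?_⟩
      rw [ofWord_cons, hwy, step_invLetter_step hm hy]
    · have hN : ∀ θ ≤ m, height m θ y ≤ N := fun θ hθ => by
        have := hle θ hθ
        have : height m θ y ≠ N + 1 := fun h => hmax ⟨θ, hθ, h⟩
        omega
      obtain ⟨w, hw, hwy⟩ := ih hy hN
      exact ⟨w, by omega, hwy⟩

theorem exists_height_eq_length (hm : 3 ≤ m) (hw : ∀ v, ofWord m w = ofWord m v →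
    w.length ≤ v.length) : ∃ θ ≤ m, height m θ (ofWord m w) = w.length := by
  by_contra! hne
  have hlt (θ : ℕ) (hθ : θ ≤ m) : height m θ (ofWord m w) < w.length :=
    (height_ofWord_le hm hθ w).lt_of_ne (hne θ hθ)
  have hpos : 0 < w.length := by
    refine List.length_pos_iff.2 fun h => hne 0 m.zero_le ?_
    simp [h, ofWord, GarsideForm.one]
  obtain ⟨v, hv, hvw⟩ := exists_ofWord_eq_of_height_le hm (isNormal_ofWord hm w) (w.length - 1)
    fun θ hθ => by have := hlt θ hθ; omega
  have := hw v hvw.symm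
  omega

theorem ofWord_cons_ne_of_geodesic (hm : 3 ≤ m) {a : Bool × Bool} {p q : List (Bool × Bool)}
    (hlen : p.length = q.length)
    (hp : ∀ v, ofWord m (a :: p) = ofWord m v → (a :: p).length ≤ v.length) :
    ofWord m (a :: p) ≠ ofWord m (invLetter a :: q) := by
  intro heq
  obtain ⟨θ, hθ, hmax⟩ := exists_height_eq_length hm hp
  have hnormal := isNormal_ofWord hm (a :: p)
  have hinv : step m (invLetter a) (ofWord m (a :: p)) = ofWord m p :=
    step_invLetter_step hm (isNormal_ofWord hm p) a
  have hself : step m a (ofWord m (a :: p)) = ofWord m q := by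
    rw [heq]
    simpa using step_invLetter_step hm (isNormal_ofWord hm q) (invLetter a)
  have hpθ := height_ofWord_le hm hθ p
  have hqθ := height_ofWord_le hm hθ q
  rw [List.length_cons] at hmax
  rcases Raises.or_invLetter hm hnormal θ a with h | h
  · have := (height_step hm hθ hnormal).1 h
    rw [hself] at this
    omega
  · have := (height_step hm hθ hnormal).1 h
    rw [hinv] at this
    omega

/-- Left multiplication by the letter `x` adds a factor to the normal form. -/
def Opens (x : Bool × Bool) (y : GarsideForm) : Prop := y.factors ≠ [] → y.start = (x.1 == x.2)

/-- The first factor of the normal form is the one created by a multiplication by the letter `x`: a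
single generator, or `Δ` without its first letter. -/
def OpenedBy (m : ℕ) (x : Bool × Bool) (y : GarsideForm) : Prop :=
  y.start = (x.1 == x.2) ∧ ∃ t, y.factors = (if x.2 then 1 else m - 1) :: t

variable {z : Bool × Bool}

theorem opens_one (x : Bool × Bool) : Opens x .one := fun h => absurd rfl h

theorem OpenedBy.opens (h : OpenedBy m x y) : Opens x y := fun _ => h.1

theorem Opens.of_ne (h : Opens x y) (hletter : z.1 ≠ x.1) (hsign : z.2 ≠ x.2) : Opens z y := by
  obtain ⟨a, s⟩ := x
  obtain ⟨c, s'⟩ := z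
  obtain rfl : c = !a := Bool.eq_not.2 hletter
  obtain rfl : s' = !s := Bool.eq_not.2 hsign
  exact fun hne => (h hne).trans (by cases a <;> cases s <;> rfl)

theorem Opens.openedBy_step (h : Opens x y) : OpenedBy m x (step m x y) := by
  obtain ⟨a, s⟩ := x
  obtain ⟨b, _ | ⟨l, t⟩, k⟩ := y
  · cases s <;> simp [OpenedBy, step]
  · obtain rfl : b = (a == s) := h (List.cons_ne_nil _ _)
    cases s <;> cases a <;> simp [OpenedBy, step]

theorem Opens.raises (h : Opens x y) {θ : ℕ} (h0 : 0 < θ) (hm : θ < m) : Raises m θ x y := by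
  obtain ⟨a, s⟩ := x
  obtain ⟨b, _ | ⟨l, t⟩, k⟩ := y
  · cases s <;> simp [Raises, threshold, h0, hm]
  · obtain rfl : b = (a == s) := h (List.cons_ne_nil _ _)
    cases s <;> cases a <;> simp [Raises, threshold, h0, hm]

/-- A cutoff for which powers of letters with sign `s` always raise the height after a turn. -/
def turnCutoff (s : Bool) : ℕ := if s then 2 else 1

theorem OpenedBy.opens_step (hm : 3 ≤ m) (h : OpenedBy m x y) (hz : z.1 ≠ x.1) :
    Opens z (step m z y) := by
  by_cases hsign : z.2 = x.2
  · obtain ⟨a, s⟩ := x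
    obtain ⟨c, s'⟩ := z
    obtain ⟨b, t, k⟩ := y
    obtain ⟨hb, t, rfl⟩ := h
    cases s <;> grind [Opens, step]
  · exact (h.opens.of_ne hz hsign).openedBy_step.opens

theorem OpenedBy.raises (hm : 3 ≤ m) (h : OpenedBy m x y) (hz : z.1 ≠ x.1) :
    Raises m (turnCutoff z.2) z y := by
  by_cases hsign : z.2 = x.2
  · obtain ⟨a, s⟩ := x
    obtain ⟨c, s'⟩ := z
    obtain ⟨b, t, k⟩ := y
    obtain ⟨hb, t, rfl⟩ := h
    cases s <;> grind [Raises, threshold, turnCutoff]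
  · refine (h.opens.of_ne hz hsign).raises ?_ ?_ <;> grind [turnCutoff]

theorem Opens.replicate_append (h : Opens x (ofWord m w)) (n : ℕ) :
    Opens x (ofWord m (List.replicate n x ++ w)) := by
  induction n with
  | zero => exact h
  | succ n ih => exact ih.openedBy_step.opens

theorem Opens.height_replicate_append (hm : 3 ≤ m) (h : Opens x (ofWord m w)) (h0 : 0 < θ)
    (hθ : θ < m) (n : ℕ) :
    height m θ (ofWord m (List.replicate n x ++ w)) = height m θ (ofWord m w) + n := by
  induction n with
  | zero => simp
  | succ n ih =>
    have hstep := (height_step hm hθ.le (isNormal_ofWord hm _)).1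
      ((h.replicate_append n).raises h0 hθ)
    rw [List.replicate_succ, List.cons_append, ofWord_cons, hstep, ih]
    push_cast
    ring

theorem exists_height_eq_length_of_sign_eq (hm : 3 ≤ m) {s : Bool} (hw : ∀ l ∈ w, l.2 = s) :
    ∃ θ ≤ m, height m θ (ofWord m w) = w.length := by
  refine ⟨if s then m else 0, by grind, ?_⟩
  induction w with
  | nil => simp [ofWord, GarsideForm.one]
  | cons x w ih =>
    obtain ⟨rfl, hw⟩ := List.forall_mem_cons.1 hw
    have hy := isNormal_ofWord hm w
    have hraises : Raises m (if x.2 then m else 0) x (ofWord m w) := by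
      obtain ⟨a, s⟩ := x
      generalize ofWord m w = y at hy
      obtain ⟨b, _ | ⟨l, t⟩, k⟩ := y
      · grind [Raises, threshold]
      · have hl := (isNormal_cons_iff.1 hy).1
        grind [Raises, threshold]
    rw [ofWord_cons, (height_step hm (by grind) hy).1 hraises, ih hw, List.length_cons]
    push_cast
    rfl

theorem opens_replicate (n : ℕ) (x : Bool × Bool) : Opens x (ofWord m (List.replicate n x)) := by
  simpa using Opens.replicate_append (m := m) (w := []) (opens_one x) n

theorem height_replicate (hm : 3 ≤ m) (h0 : 0 < θ) (hθ : θ < m) (n : ℕ) (x : Bool × Bool) :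
    height m θ (ofWord m (List.replicate n x)) = n := by
  have h := Opens.height_replicate_append (w := []) hm (opens_one x) h0 hθ n
  rw [List.append_nil] at h
  simpa [ofWord, GarsideForm.one] using h

theorem opens_and_height_of_turn (hm : 3 ≤ m) {x y : Bool × Bool} (hxy : x.1 ≠ y.1) (r s : ℕ) :
    Opens x (ofWord m (List.replicate (r + 1) x ++ List.replicate s y)) ∧
      height m (turnCutoff x.2) (ofWord m (List.replicate (r + 1) x ++ List.replicate s y)) =
        r + 1 + s := by
  have h0 : 0 < turnCutoff x.2 := by grind [turnCutoff]
  have hθ : turnCutoff x.2 < m := by grind [turnCutoff]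
  set W := List.replicate s y
  have hW : height m (turnCutoff x.2) (ofWord m W) = s := height_replicate hm h0 hθ s y
  have hx : Opens x (ofWord m (x :: W)) ∧
      height m (turnCutoff x.2) (ofWord m (x :: W)) = s + 1 := by
    suffices h : Opens x (ofWord m (x :: W)) ∧ Raises m (turnCutoff x.2) x (ofWord m W) by
      refine ⟨h.1, ?_⟩
      rw [ofWord_cons, (height_step hm hθ.le (isNormal_ofWord hm W)).1 h.2, hW]
    rcases s with _ | s
    · exact ⟨(opens_one x).openedBy_step.opens, (opens_one x).raises h0 hθ⟩
    · have hy : OpenedBy m y (ofWord m W) := (opens_replicate s y).openedBy_step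
      exact ⟨hy.opens_step hm hxy, hy.raises hm hxy⟩
  rw [List.replicate_succ', List.append_assoc, List.singleton_append]
  refine ⟨hx.1.replicate_append r, ?_⟩
  rw [hx.1.height_replicate_append hm h0 hθ, hx.2]
  ring

theorem exists_height_eq_length_of_two_turns (hm : 3 ≤ m) {x y z : Bool × Bool} (hxy : x.1 ≠ y.1)
    (hzy : z.1 = y.1) (r s : ℕ) : ∃ θ ≤ m,
      height m θ (ofWord m (z :: (List.replicate (r + 1) x ++ List.replicate s y))) =
        r + s + 2 := by
  by_cases hsign : ∀ l ∈ z :: (List.replicate (r + 1) x ++ List.replicate s y), l.2 = x.2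
  · obtain ⟨θ, hθ, h⟩ := exists_height_eq_length_of_sign_eq hm hsign
    refine ⟨θ, hθ, h.trans ?_⟩
    simp only [List.length_cons, List.length_append, List.length_replicate]
    push_cast
    ring
  have h0 : 0 < turnCutoff x.2 := by grind [turnCutoff]
  have hθ : turnCutoff x.2 < m := by grind [turnCutoff]
  have hzx : z.1 ≠ x.1 := fun h => hxy (h.symm.trans hzy)
  obtain ⟨hopens, hheight⟩ := opens_and_height_of_turn hm hxy r s
  set V := List.replicate (r + 1) x ++ List.replicate s y
  have hraises : Raises m (turnCutoff x.2) z (ofWord m V) := by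
    by_cases hz : z.2 = x.2
    · have hy : y.2 ≠ x.2 := fun hy => hsign <| by grind
      have hx : Opens x (ofWord m (List.replicate s y)) :=
        (opens_replicate s y).of_ne hxy hy.symm
      have hV : OpenedBy m x (ofWord m V) := (hx.replicate_append r).openedBy_step
      exact hz ▸ hV.raises hm hzx
    · exact (hopens.of_ne hzx hz).raises h0 hθ
  refine ⟨turnCutoff x.2, hθ.le, ?_⟩
  rw [ofWord_cons, (height_step hm hθ.le (isNormal_ofWord hm V)).1 hraises, hheight]
  ring

theorem ofWord_turn_ne (hm : 3 ≤ m) {x y b : Bool × Bool} (hxy : x.1 ≠ y.1) (hb : b.1 = y.1)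
    {q : List (Bool × Bool)} {r s : ℕ} (hq : q.length = r + s) :
    ofWord m (List.replicate (r + 1) x ++ List.replicate s y) ≠ ofWord m (b :: q) := by
  intro heq
  obtain ⟨θ, hθ, h⟩ := exists_height_eq_length_of_two_turns hm (z := invLetter b) hxy hb r s
  have hle := height_ofWord_le hm hθ q
  rw [ofWord_cons, heq, ofWord_cons, step_invLetter_step hm (isNormal_ofWord hm q)] at h
  omega

end GarsideForm

/-! ### The dihedral congruences of an Artin group -/

theorem map_altProd {G H : Type*} [Monoid G] [Monoid H] (f : G →* H) (n : ℕ) (x y : G) :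
    f (altProd n x y) = altProd n (f x) (f y) := by
  induction n generalizing x y with
  | zero => exact map_one f
  | succ n ih => rw [altProd, map_mul, ih, altProd]

theorem eq_of_isReduced_of_mk_eq {S : Type*} {u v : List (S × Bool)} (hu : FreeGroup.IsReduced u)
    (h : FreeGroup.mk u = FreeGroup.mk v) (hlen : v.length ≤ u.length) : u = v := by
  classical
  have hred : FreeGroup.Red v u := by
    rw [← hu.reduce_eq, FreeGroup.reduce.sound h]
    exact FreeGroup.reduce.red
  exact hred.sublist.eq_of_length_le hlen

theorem exists_mk_eq_altProd {S : Type*} (k : ℕ) (a b : S) :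
    ∃ w, SupportedOn {a, b} w ∧ FreeGroup.mk w = altProd k (.of a) (.of b) := by
  induction k generalizing a b with
  | zero => exact ⟨[], .nil, rfl⟩
  | succ k ih =>
    obtain ⟨w, hw, hwk⟩ := ih b a
    refine ⟨(a, true) :: w, .cons (by simp) (Set.pair_comm a b ▸ hw), ?_⟩
    rw [altProd, ← hwk]
    rfl

section ArtinConOn

variable {S : Type*} (M : S → S → ℕ∞) {P : Set S}

/-- The Artin relators between generators in `P`. -/
def artinRelsOn (P : Set S) : Set (FreeGroup S) :=
  {r | ∃ a ∈ P, ∃ b ∈ P, a ≠ b ∧ ∃ m : ℕ, M a b = m ∧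
    r = altProd m (.of a) (.of b) * (altProd m (.of b) (.of a))⁻¹}

/-- The congruence generated by the Artin relations between generators in `P`. -/
def artinConOn (P : Set S) : Con (FreeGroup S) := Con.ker (PresentedGroup.mk (artinRelsOn M P))

variable {M}

theorem artinConOn_altProd {a b : S} (ha : a ∈ P) (hb : b ∈ P) (hab : a ≠ b) {m : ℕ}
    (hm : M a b = m) : artinConOn M P (altProd m (.of a) (.of b)) (altProd m (.of b) (.of a)) := by
  have hrel := PresentedGroup.one_of_mem (rels := artinRelsOn M P) ⟨a, ha, b, hb, hab, m, hm, rfl⟩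
  rwa [map_mul, map_inv, mul_inv_eq_one] at hrel

theorem map_eq_of_artinConOn {H : Type*} [Group H] (f : FreeGroup S →* H)
    (hf : ∀ a ∈ P, ∀ b ∈ P, a ≠ b → ∀ m : ℕ, M a b = m →
      altProd m (f (.of a)) (f (.of b)) = altProd m (f (.of b)) (f (.of a)))
    {u v : FreeGroup S} (h : artinConOn M P u v) : f u = f v := by
  have hle : Subgroup.normalClosure (artinRelsOn M P) ≤ f.ker := by
    refine Subgroup.normalClosure_le_normal ?_
    rintro _ ⟨a, ha, b, hb, hab, m, hm, rfl⟩
    rw [SetLike.mem_coe, MonoidHom.mem_ker, map_mul, map_inv, mul_inv_eq_one, map_altProd,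
      map_altProd]
    exact hf a ha b hb hab m hm
  exact (MonoidHom.eq_iff f).2 (hle (QuotientGroup.eq.1 h.symm))

theorem length_mod_two_eq_of_artinConOn {u v : List (S × Bool)}
    (h : artinConOn M P (.mk u) (.mk v)) : u.length % 2 = v.length % 2 := by
  let f : FreeGroup S →* Multiplicative (ZMod 2) := FreeGroup.lift fun _ => .ofAdd 1
  have hf (w : List (S × Bool)) : f (.mk w) = .ofAdd (w.length : ZMod 2) := by
    have hletter (s : Bool) :
        cond s (Multiplicative.ofAdd (1 : ZMod 2)) (.ofAdd 1)⁻¹ = .ofAdd 1 := by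
      cases s <;> rfl
    simp only [f, FreeGroup.lift_mk, hletter, List.map_const', List.prod_replicate]
    rw [← ofAdd_nsmul, nsmul_one]
  have huv := map_eq_of_artinConOn f (fun _ _ _ _ _ _ _ => by simp [f]) h
  rw [hf, hf] at huv
  exact (ZMod.natCast_eq_natCast_iff' _ _ _).1 (Multiplicative.ofAdd.injective huv)

open Classical in
/-- Letters for `i` and `j` as letters over `Bool`, where `i` becomes `true`. -/
noncomputable def toBoolLetter (i : S) (x : S × Bool) : Bool × Bool := (decide (x.1 = i), x.2)

/-- The inverse of `toBoolLetter` on the letters for `i` and `j`. -/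
def ofBoolLetter (i j : S) (x : Bool × Bool) : S × Bool := (cond x.1 i j, x.2)

variable {i j : S} {m : ℕ}

theorem ofBoolLetter_toBoolLetter {x : S × Bool} (hx : x.1 ∈ ({i, j} : Set S)) :
    ofBoolLetter i j (toBoolLetter i x) = x := by
  obtain ⟨k, s⟩ := x
  by_cases hk : k = i
  · simp [ofBoolLetter, toBoolLetter, hk]
  · obtain rfl : k = j := hx.resolve_left hk
    simp [ofBoolLetter, toBoolLetter, hk]

theorem supportedOn_map_ofBoolLetter (w : List (Bool × Bool)) :
    SupportedOn {i, j} (w.map (ofBoolLetter i j)) := by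
  simp only [SupportedOn, List.forall_mem_map, ofBoolLetter]
  rintro ⟨_ | _, s⟩ - <;> simp

theorem map_ofBoolLetter_map_toBoolLetter {u : List (S × Bool)} (hu : SupportedOn {i, j} u) :
    (u.map (toBoolLetter i)).map (ofBoolLetter i j) = u := by
  rw [List.map_map]
  exact (List.map_congr_left fun x hx => ofBoolLetter_toBoolLetter (hu x hx)).trans u.map_id

theorem ofWord_eq_of_artinConOn (hm : 3 ≤ m) (hij : i ≠ j) (hM : M i j = m) (hM' : M j i = m)
    {u v : List (S × Bool)} (h : artinConOn M {i, j} (.mk u) (.mk v)) :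
    GarsideForm.ofWord m (u.map (toBoolLetter i)) =
      GarsideForm.ofWord m (v.map (toBoolLetter i)) := by
  classical
  let f := (FreeGroup.lift fun b => GarsideForm.stepPerm hm (b, true)).comp
    (FreeGroup.map fun s => decide (s = i))
  have hfi : f (.of i) = GarsideForm.stepPerm hm (true, true) := by simp [f]
  have hfj : f (.of j) = GarsideForm.stepPerm hm (false, true) := by simp [f, hij.symm]
  have huv : f (.mk u) = f (.mk v) := by
    refine map_eq_of_artinConOn f ?_ h
    rintro a (rfl | rfl) b (rfl | rfl) hab n hn
    · exact absurd rfl hab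
    · obtain rfl : m = n := by rw [hM] at hn; exact_mod_cast hn
      rw [hfi, hfj, GarsideForm.altProd_stepPerm_comm]
    · obtain rfl : m = n := by rw [hM'] at hn; exact_mod_cast hn
      rw [hfi, hfj, GarsideForm.altProd_stepPerm_comm]
    · exact absurd rfl hab
  have hf (w : List (S × Bool)) : (f (.mk w) ⟨.one, GarsideForm.isNormal_one⟩).1 =
      GarsideForm.ofWord m (w.map (toBoolLetter i)) :=
    GarsideForm.coe_lift_stepPerm_mk hm _
  rw [← hf, ← hf, huv]

theorem artinConOn_of_ofWord_eq (hm : 3 ≤ m) (hij : i ≠ j) (hM : M i j = m)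
    {u v : List (Bool × Bool)} (h : GarsideForm.ofWord m u = GarsideForm.ofWord m v) :
    artinConOn M {i, j} (.mk (u.map (ofBoolLetter i j))) (.mk (v.map (ofBoolLetter i j))) := by
  let π := PresentedGroup.mk (artinRelsOn M {i, j})
  let g : Bool → PresentedGroup (artinRelsOn M {i, j}) := fun b => π (.of (cond b i j))
  have hg : altProd m (g true) (g false) = altProd m (g false) (g true) := by
    have hrel : π _ = π _ := artinConOn_altProd (P := {i, j}) (by simp) (by simp) hij hM
    rwa [map_altProd, map_altProd] at hrel
  have hπ (w : List (Bool × Bool)) : π (.mk (w.map (ofBoolLetter i j))) =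
      GarsideForm.eval m g (GarsideForm.ofWord m w) := by
    have hlift : FreeGroup.lift g = π.comp (FreeGroup.map (cond · i j)) := by
      ext b
      simp [g]
    rw [GarsideForm.eval_ofWord hg hm, hlift]
    rfl
  change π _ = π _
  rw [hπ, hπ, h]

theorem mk_eq_of_artinConOn_of_eq_top (hM : M i j = ⊤) (hM' : M j i = ⊤) {u v : FreeGroup S}
    (h : artinConOn M {i, j} u v) : u = v := by
  refine map_eq_of_artinConOn (MonoidHom.id _) ?_ h
  rintro a (rfl | rfl) b (rfl | rfl) hab n hn
  · exact absurd rfl hab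
  · simp [hM] at hn
  · simp [hM'] at hn
  · exact absurd rfl hab

theorem not_artinConOn_peak_of_eq_top (hM : M i j = ⊤) (hM' : M j i = ⊤) {a : S × Bool}
    {p q : List (S × Bool)} (hp : SupportedOn {i, j} (a :: p)) (hlen : p.length = q.length)
    (hmin : ∀ v, SupportedOn {i, j} v → artinConOn M {i, j} (.mk (a :: p)) (.mk v) →
      (a :: p).length ≤ v.length) :
    ¬ artinConOn M {i, j} (.mk (a :: p)) (.mk (invLetter a :: q)) := by
  classical
  intro h
  have hsub : (FreeGroup.reduce (a :: p)).Sublist (a :: p) := FreeGroup.reduce.red.sublist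
  have hred : FreeGroup.IsReduced (a :: p) := by
    refine .of_reduce_eq (hsub.eq_of_length_le (hmin _ (fun l hl => hp l (hsub.subset hl)) ?_))
    rw [FreeGroup.reduce.self]
    exact (artinConOn M _).refl _
  have heq := eq_of_isReduced_of_mk_eq hred (mk_eq_of_artinConOn_of_eq_top hM hM' h)
    (by simp [hlen])
  have ha : a = invLetter a := List.head_eq_of_cons_eq heq
  exact (Bool.eq_not_self _).1 (congrArg Prod.snd ha)

theorem not_artinConOn_peak (hm : 3 ≤ m) (hij : i ≠ j) (hM : M i j = m) (hM' : M j i = m)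
    {a : S × Bool} {p q : List (S × Bool)} (hp : SupportedOn {i, j} (a :: p))
    (hlen : p.length = q.length)
    (hmin : ∀ v, SupportedOn {i, j} v → artinConOn M {i, j} (.mk (a :: p)) (.mk v) →
      (a :: p).length ≤ v.length) :
    ¬ artinConOn M {i, j} (.mk (a :: p)) (.mk (invLetter a :: q)) := by
  intro h
  refine GarsideForm.ofWord_cons_ne_of_geodesic hm (a := toBoolLetter i a)
    (p := p.map (toBoolLetter i)) (q := q.map (toBoolLetter i)) (by simp [hlen])
    (fun w hw => ?_) (ofWord_eq_of_artinConOn hm hij hM hM' h)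
  have hcon := artinConOn_of_ofWord_eq hm hij hM (u := (a :: p).map (toBoolLetter i)) hw
  rw [map_ofBoolLetter_map_toBoolLetter hp] at hcon
  simpa using hmin _ (supportedOn_map_ofBoolLetter w) hcon

theorem not_artinConOn_turn_of_eq_top {x y b : S × Bool} (hM : M x.1 y.1 = ⊤)
    (hM' : M y.1 x.1 = ⊤) (hxy : x.1 ≠ y.1) (hb : b.1 = y.1) {q : List (S × Bool)} {r s : ℕ}
    (hq : q.length = r + s) :
    ¬ artinConOn M {x.1, y.1} (.mk (List.replicate (r + 1) x ++ List.replicate s y))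
      (.mk (b :: q)) := by
  intro h
  have hred : FreeGroup.IsReduced (List.replicate (r + 1) x ++ List.replicate s y) := by
    refine List.isChain_append.2 ⟨List.isChain_replicate_of_rel _ fun _ => rfl,
      List.isChain_replicate_of_rel _ fun _ => rfl, fun x' hx y' hy heq => absurd heq ?_⟩
    rwa [List.eq_of_mem_replicate (List.mem_of_getLast? hx),
      List.eq_of_mem_replicate (List.mem_of_head? hy)]
  have heq := eq_of_isReduced_of_mk_eq hred (mk_eq_of_artinConOn_of_eq_top hM hM' h)
    (by simp [hq])
  have hxb : x = b := List.head_eq_of_cons_eq heq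
  exact hxy (hxb ▸ hb)

theorem not_artinConOn_turn (hm : 3 ≤ m) {x y b : S × Bool} (hM : M x.1 y.1 = m)
    (hM' : M y.1 x.1 = m) (hxy : x.1 ≠ y.1) (hb : b.1 = y.1) {q : List (S × Bool)} {r s : ℕ}
    (hq : q.length = r + s) :
    ¬ artinConOn M {x.1, y.1} (.mk (List.replicate (r + 1) x ++ List.replicate s y))
      (.mk (b :: q)) := by
  intro h
  have heq := ofWord_eq_of_artinConOn hm hxy hM hM' h
  rw [List.map_append, List.map_replicate, List.map_replicate, List.map_cons] at heq
  exact GarsideForm.ofWord_turn_ne hm (by simp [toBoolLetter, hxy.symm])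
    (by simp [toBoolLetter, hb]) (by simp [hq]) heq

/-- The dihedral congruences of an Artin group of large type. -/
def artinSystem (M : S → S → ℕ∞) (hsymm : ∀ i j, M i j = M j i)
    (hlarge : ∀ i j, i ≠ j → 3 ≤ M i j) : DihedralSystem S where
  con := artinConOn M
  length_mod_two := length_mod_two_eq_of_artinConOn
  no_peak {i j a p q} hij hp hlen hmin := by
    have hM := hlarge i j hij
    cases h : M i j with
    | top => exact not_artinConOn_peak_of_eq_top h (hsymm i j ▸ h) hp hlen hmin
    | coe m =>
      rw [h] at hM
      exact not_artinConOn_peak (mod_cast hM) hij h (hsymm i j ▸ h) hp hlen hmin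
  no_turn {x y b q r s} hxy hb hq := by
    have hM := hlarge x.1 y.1 hxy
    cases h : M x.1 y.1 with
    | top => exact not_artinConOn_turn_of_eq_top h (hsymm x.1 y.1 ▸ h) hxy hb hq
    | coe m =>
      rw [h] at hM
      exact not_artinConOn_turn (mod_cast hM) h (hsymm x.1 y.1 ▸ h) hxy hb hq

end ArtinConOn

/-! ### Divisors in an Artin group of large type -/

section LargeType

variable {n : ℕ} {M : Fin n → Fin n → ℕ∞} {u v w t : List (Letter n)} {g h : ArtinGroup n M}

theorem wordElt_eq_mk (w : List (Letter n)) :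
    wordElt n M w = PresentedGroup.mk (artinRels n M) (.mk w) := by
  have hlift : PresentedGroup.mk (artinRels n M) = FreeGroup.lift (gen n M) := by
    ext i
    simp [gen, PresentedGroup.of]
  rw [hlift, FreeGroup.lift_mk, wordElt]
  refine congrArg List.prod (List.map_congr_left ?_)
  rintro ⟨a, _ | _⟩ - <;> rfl

theorem wordElt_append (u v : List (Letter n)) :
    wordElt n M (u ++ v) = wordElt n M u * wordElt n M v := by
  simp [wordElt]

theorem wordElt_invRev (u : List (Letter n)) :
    wordElt n M (FreeGroup.invRev u) = (wordElt n M u)⁻¹ := by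
  rw [wordElt_eq_mk, wordElt_eq_mk, ← FreeGroup.inv_mk, map_inv]

theorem artinRelsOn_univ : artinRelsOn M Set.univ = artinRels n M := by
  simp [artinRelsOn, artinRels]

theorem wordElt_eq_iff : wordElt n M u = wordElt n M v ↔ artinConOn M Set.univ (.mk u) (.mk v) := by
  rw [wordElt_eq_mk, wordElt_eq_mk, artinConOn, Con.ker_rel, artinRelsOn_univ]

theorem wordElt_eq_of_artinConOn {P : Set (Fin n)} (huv : artinConOn M P (.mk u) (.mk v)) :
    wordElt n M u = wordElt n M v := by
  refine wordElt_eq_iff.2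
    (map_eq_of_artinConOn (PresentedGroup.mk _) (fun a _ b _ hab m hm => ?_) huv)
  rw [← map_altProd, ← map_altProd]
  exact artinConOn_altProd (Set.mem_univ a) (Set.mem_univ b) hab hm

theorem toGen_mem_genSet (l : Letter n) : toGen n M l ∈ genSet n M := by
  rcases l with ⟨i, _ | _⟩
  · exact ⟨i, .inr rfl⟩
  · exact ⟨i, .inl rfl⟩

theorem ℓA_wordElt_le (u : List (Letter n)) : ℓA n M (wordElt n M u) ≤ u.length :=
  Nat.sInf_le ⟨u.map (toGen n M), List.forall_mem_map.2 fun l _ => toGen_mem_genSet l,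
    List.length_map _, rfl⟩

theorem exists_wordElt_eq_prod {l : List (ArtinGroup n M)} (hl : ∀ a ∈ l, a ∈ genSet n M) :
    ∃ u, u.length = l.length ∧ wordElt n M u = l.prod := by
  induction l with
  | nil => exact ⟨[], rfl, rfl⟩
  | cons a l ih =>
    obtain ⟨⟨i, ha⟩, hl⟩ := List.forall_mem_cons.1 hl
    obtain ⟨u, hul, hu⟩ := ih hl
    rcases ha with rfl | rfl
    · exact ⟨(i, true) :: u, by simp [hul], by simp [← hu, wordElt, toGen]⟩
    · exact ⟨(i, false) :: u, by simp [hul], by simp [← hu, wordElt, toGen]⟩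

theorem wordElt_surjective : Function.Surjective (wordElt n M) := fun g => by
  obtain ⟨x, rfl⟩ := PresentedGroup.mk_surjective (artinRels n M) g
  exact ⟨x.toWord, by rw [wordElt_eq_mk, FreeGroup.mk_toWord]⟩

theorem exists_wordElt_eq_of_length_eq_ℓA (g : ArtinGroup n M) :
    ∃ u, wordElt n M u = g ∧ u.length = ℓA n M g := by
  have hne : {N : ℕ | ∃ l : List (ArtinGroup n M), (∀ a ∈ l, a ∈ genSet n M) ∧ l.length = N ∧
      l.prod = g}.Nonempty := by
    obtain ⟨u, rfl⟩ := wordElt_surjective g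
    exact ⟨_, u.map (toGen n M), List.forall_mem_map.2 fun l _ => toGen_mem_genSet l, rfl, rfl⟩
  obtain ⟨l, hl, hlen, rfl⟩ := Nat.sInf_mem hne
  obtain ⟨u, hul, hu⟩ := exists_wordElt_eq_prod hl
  exact ⟨u, hu, hul.trans hlen⟩

theorem ℓA_inv (g : ArtinGroup n M) : ℓA n M g⁻¹ = ℓA n M g := by
  have hle (g : ArtinGroup n M) : ℓA n M g⁻¹ ≤ ℓA n M g := by
    obtain ⟨u, rfl, hu⟩ := exists_wordElt_eq_of_length_eq_ℓA g
    rw [← wordElt_invRev, ← hu, ← FreeGroup.invRev_length (L₁ := u)]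
    exact ℓA_wordElt_le _
  exact (hle g).antisymm (by simpa using hle g⁻¹)

theorem isRightDiv_inv_iff {G : Type*} [Group G] {ℓ : G → ℕ} (hℓ : ∀ g, ℓ g⁻¹ = ℓ g) {h g : G} :
    IsRightDiv ℓ h⁻¹ g⁻¹ ↔ IsLeftDiv ℓ h g := by
  rw [IsRightDiv, IsLeftDiv, ← hℓ (h⁻¹ * g), mul_inv_rev, hℓ h, hℓ g, add_comm]

theorem wordElt_mem_Gij {i j : Fin n} (hu : SupportedOn {i, j} u) :
    wordElt n M u ∈ Gij n M i j := by
  refine list_prod_mem (List.forall_mem_map.2 fun l hl => ?_)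
  have hgen : gen n M l.1 ∈ Gij n M i j :=
    Subgroup.subset_closure ((hu l hl).imp (congrArg (gen n M)) (congrArg (gen n M)))
  unfold toGen
  split_ifs
  exacts [hgen, inv_mem hgen]

theorem exists_wordElt_eq_of_mem_Gij {i j : Fin n} (hg : g ∈ Gij n M i j) :
    ∃ u, SupportedOn {i, j} u ∧ wordElt n M u = g := by
  induction hg using Subgroup.closure_induction with
  | mem x hx =>
    rcases hx with rfl | rfl
    · exact ⟨[(i, true)], .cons (by simp) .nil, by simp [wordElt, toGen]⟩
    · exact ⟨[(j, true)], .cons (by simp) .nil, by simp [wordElt, toGen]⟩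
  | one => exact ⟨[], .nil, rfl⟩
  | mul x y _ _ hx hy =>
    obtain ⟨u, hu, rfl⟩ := hx
    obtain ⟨v, hv, rfl⟩ := hy
    exact ⟨u ++ v, hu.append hv, wordElt_append u v⟩
  | inv x _ hx =>
    obtain ⟨u, hu, rfl⟩ := hx
    exact ⟨FreeGroup.invRev u, hu.invRev, wordElt_invRev u⟩

variable (hsymm : ∀ i j, M i j = M j i) (hlarge : ∀ i j, i ≠ j → 3 ≤ M i j)

theorem action_eq_of_wordElt_eq (huv : wordElt n M u = wordElt n M v) :
    (artinSystem M hsymm hlarge).action (.mk u) = (artinSystem M hsymm hlarge).action (.mk v) := by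
  refine map_eq_of_artinConOn _ (fun a _ b _ hab m hm => ?_) (wordElt_eq_iff.1 huv)
  obtain ⟨p, hp, hpa⟩ := exists_mk_eq_altProd m a b
  obtain ⟨q, hq, hqb⟩ := exists_mk_eq_altProd m b a
  rw [← map_altProd, ← map_altProd, ← hpa, ← hqb]
  refine DihedralSystem.action_eq_of_dihEq hab hp (Set.pair_comm a b ▸ hq) ?_
  rw [DihedralSystem.DihEq, hpa, hqb]
  exact artinConOn_altProd (by simp) (by simp) hab hm

variable {hsymm hlarge}

open DihedralSystem

theorem wordElt_eq_of_sim (h : (artinSystem M hsymm hlarge).Sim w v) :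
    wordElt n M w = wordElt n M v := by
  simp only [wordElt_eq_mk]
  refine Sim.map_mk_eq _ (fun _ hd => ?_) h
  simpa only [wordElt_eq_mk] using wordElt_eq_of_artinConOn hd

theorem ℓA_wordElt_of_reduced (hw : (artinSystem M hsymm hlarge).Reduced w) :
    ℓA n M (wordElt n M w) = w.length := by
  refine (ℓA_wordElt_le w).antisymm ?_
  obtain ⟨u, hu, hlen⟩ := exists_wordElt_eq_of_length_eq_ℓA (wordElt n M w)
  have hnil : (artinSystem M hsymm hlarge).Reduced [] := trivial
  have hw' : (artinSystem M hsymm hlarge).Reduced (w ++ []) := by rwa [List.append_nil]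
  calc w.length = hw'.toClass.length :=
      (congrArg List.length (List.append_nil w)).symm
    _ = ((artinSystem M hsymm hlarge).action (.mk u) hnil.toClass).length := by
      rw [← action_toClass hw', action_eq_of_wordElt_eq hsymm hlarge hu]
    _ ≤ u.length + hnil.toClass.length := length_action_le u _
    _ = ℓA n M (wordElt n M w) := hlen

theorem isLeftDiv_of_reduced_append (h : (artinSystem M hsymm hlarge).Reduced (u ++ t)) :
    IsLeftDiv (ℓA n M) (wordElt n M u) (wordElt n M (u ++ t)) := by
  obtain ⟨v, hv, hlen⟩ := exists_wordElt_eq_of_length_eq_ℓA (wordElt n M u)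
  have hle : ℓA n M (wordElt n M (u ++ t)) ≤ v.length + t.length := by
    rw [wordElt_append, ← hv, ← wordElt_append, ← List.length_append]
    exact ℓA_wordElt_le _
  have hu := ℓA_wordElt_le (M := M) u
  rw [IsLeftDiv, wordElt_append, inv_mul_cancel_left, ← wordElt_append, ℓA_wordElt_of_reduced h,
    ℓA_wordElt_of_reduced h.of_append]
  rw [ℓA_wordElt_of_reduced h] at hle
  simp only [List.length_append] at hle ⊢
  omega

theorem headFree_of_forall_not_isLeftDiv {i j : Fin n}
    (hw : (artinSystem M hsymm hlarge).Reduced w)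
    (h : ∀ g ∈ Gij n M i j, g ≠ 1 → ¬ IsLeftDiv (ℓA n M) g (wordElt n M w)) :
    (artinSystem M hsymm hlarge).HeadFree {i, j} w := by
  intro b t hb hsim
  have hbt : (artinSystem M hsymm hlarge).Reduced ([b] ++ t) := hw.of_sim hsim
  refine h (wordElt n M [b]) (wordElt_mem_Gij (.cons hb .nil)) (fun hone => ?_) ?_
  · have hlen := ℓA_wordElt_of_reduced hbt
    rw [wordElt_append, hone, one_mul, ℓA_wordElt_of_reduced hbt.of_append] at hlen
    simp at hlen
  · rw [wordElt_eq_of_sim hsim]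
    exact isLeftDiv_of_reduced_append hbt

theorem exists_reduced_wordElt_eq (hsymm : ∀ i j, M i j = M j i)
    (hlarge : ∀ i j, i ≠ j → 3 ≤ M i j) (g : ArtinGroup n M) :
    ∃ w, (artinSystem M hsymm hlarge).Reduced w ∧ wordElt n M w = g := by
  obtain ⟨u, rfl⟩ := wordElt_surjective g
  simp only [wordElt_eq_mk]
  refine exists_reduced_map_mk_eq (PresentedGroup.mk (artinRels n M)) (fun _ hd => ?_) u
  simpa only [wordElt_eq_mk] using wordElt_eq_of_artinConOn hd

theorem exists_dihGeodesic_wordElt_eq (hsymm : ∀ i j, M i j = M j i)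
    (hlarge : ∀ i j, i ≠ j → 3 ≤ M i j) {i j : Fin n} (hg : g ∈ Gij n M i j) :
    ∃ u, SupportedOn {i, j} u ∧ (artinSystem M hsymm hlarge).DihGeodesic {i, j} u ∧
      wordElt n M u = g := by
  obtain ⟨v, hv, rfl⟩ := exists_wordElt_eq_of_mem_Gij hg
  obtain ⟨u, hu, huv, hgeo⟩ := (artinSystem M hsymm hlarge).exists_dihGeodesic hv
  exact ⟨u, hu, hgeo, (wordElt_eq_of_artinConOn huv).symm⟩

end LargeType

/-- **Lemma.** In an Artin group of large type, if no nontrivial element of `G(i,j)` is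
a left divisor of `g₁` or a right divisor of `g₂`, and `g₁ g₂ ∈ G(i,j)`, then
`g₁ g₂ = 1`. -/
theorem product_in_two_generator_subgroup_trivial
    (n : ℕ) (hn : 2 ≤ n) (M : Fin n → Fin n → ℕ∞)
    (hsymm : ∀ i j, M i j = M j i)
    (hdiag : ∀ i, M i i = 1)
    (hlarge : ∀ i j, i ≠ j → 3 ≤ M i j)
    (i j : Fin n) (hij : i ≠ j) (g₁ g₂ : ArtinGroup n M)
    (h₁ : ∀ h ∈ Gij n M i j, h ≠ 1 → ¬ IsLeftDiv (ℓA n M) h g₁)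
    (h₂ : ∀ h ∈ Gij n M i j, h ≠ 1 → ¬ IsRightDiv (ℓA n M) h g₂)
    (hprod : g₁ * g₂ ∈ Gij n M i j) :
    g₁ * g₂ = 1 := by
  obtain ⟨w, hw, hwg⟩ := exists_reduced_wordElt_eq hsymm hlarge g₂⁻¹
  have hfree : (artinSystem M hsymm hlarge).HeadFree {i, j} w := by
    refine headFree_of_forall_not_isLeftDiv hw fun h hh hne hdiv => ?_
    rw [hwg] at hdiv
    refine h₂ h⁻¹ (inv_mem hh) (inv_ne_one.2 hne) ?_
    simpa using (isRightDiv_inv_iff ℓA_inv).2 hdiv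
  obtain ⟨u, hu, hgeo, hug⟩ := exists_dihGeodesic_wordElt_eq hsymm hlarge hprod
  have hdiv : IsLeftDiv (ℓA n M) (wordElt n M u) (wordElt n M (u ++ w)) :=
    isLeftDiv_of_reduced_append (hw.append hfree hu hgeo)
  rw [wordElt_append, hug, hwg, mul_inv_cancel_right] at hdiv
  exact by_contra fun hne => h₁ _ hprod hne hdiv

end ArtinRD
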